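/- arXiv:2002.09363 — 5 statements merged into one kernel-verified Lean document; each statement's English description precedes it below -/
import Mathlib

section
/- Existence of non-constant q-periodic boundary law solutions for every period (Theorem 3.1, part 1): Fix an integer d ≥ 2 and let Q : ℤ → (0,∞) be even with Q(0) = 1 and Σ_{j∈ℤ} Q(j) < ∞. If (‖Q‖_{1,ℤ}, ‖Q‖_{1,ℤ∖{0}}) ∈ G_d, then for every integer q ≥ 2 there exists λ : ℤ/qℤ → (0,∞) with λ(0̄) = 1 and λ(ī) < 1 for all ī ≠ 0̄ (in particular λ is not constant, i.e. not the free state) such that λ(ī) = (Σ_{j̄∈ℤ/qℤ} Q_q(ī − j̄) λ(j̄) / Σ_{j̄∈ℤ/qℤ} Q_q(j̄) λ(j̄))^d for every ī ∈ ℤ/qℤ. -/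
/-!
Write `a = Q_q` and substitute `lam = x ^ d`. The equation becomes the fixed point equation `x = T x`,
`T x i = (∑ j, a (i - j) * x j ^ d) / (∑ j, a j * x j ^ d)`, and evenness of `a` gives `T x 0 = 1`.
The map `T` is studied on the compact set `K` of all `x ≥ 0` with `x 0 = 1` and
`∑_{i ≠ 0} x i ≤ ε`. As `a 0 ≥ 1`, the denominator is at least `1` on `K`. Together with
`∑ a = γ` and `∑_{i ≠ 0} a i ≤ δ`, Young's inequality for convolutions gives
`∑_{i ≠ 0} T x i ≤ δ + γ ε ^ d ≤ ε`, so that `T` preserves `K` (`blMap_mem`), and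
`‖T x - T y‖₁ ≤ (d γ ε ^ (d - 1) + d δ ε ^ d) ‖x - y‖₁` (`blMap_contract`), with a constant below `1`.

A minimizer over the compact set `K` of the displacement `‖T x - x‖₁` is then a fixed point, since
otherwise `T x` would have a smaller displacement (`exists_fixed`). The second condition in the
definition of the good set also forces `ε < 1`, hence `x i < 1` for `i ≠ 0`.
-/

open scoped BigOperators
open Filter Topology

noncomputable section

/-- The good set `G_d ⊆ (1,∞) × (0,∞)`. -/
def goodSet (d : ℕ) : Set (ℝ × ℝ) :=
  {gd | 1 < gd.1 ∧ 0 < gd.2 ∧ ∃ ε > 0,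
    gd.2 + gd.1 * ε ^ d ≤ ε ∧
    2 * d * gd.1 * ε ^ (d - 1) + 2 * d * gd.2 * ε ^ d < 1}

/-- The fuzzy transfer operator `Q_q(ī) = Σ_{j ≡ i mod q} Q(j)`. -/
noncomputable def Qfuzzy (q : ℕ) (Q : ℤ → ℝ) (i : ZMod q) : ℝ :=
  ∑' j : {j : ℤ // (j : ZMod q) = i}, Q j.1

/-- The `p`-norm `‖x‖_{p,ℤ}`. -/
noncomputable def normZ (p : ℝ) (x : ℤ → ℝ) : ℝ :=
  (∑' j : ℤ, |x j| ^ p) ^ (1 / p)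

/-- The `p`-norm `‖x‖_{p,ℤ∖{0}}`. -/
noncomputable def normZ0 (p : ℝ) (x : ℤ → ℝ) : ℝ :=
  (∑' j : {j : ℤ // j ≠ 0}, |x j.1| ^ p) ^ (1 / p)

/-- The `p`-norm `‖x‖_{p,ℤ/qℤ}`. -/
noncomputable def normM (q : ℕ) (p : ℝ) (x : ZMod q → ℝ) : ℝ :=
  (∑' i : ZMod q, |x i| ^ p) ^ (1 / p)

/-- The `p`-norm `‖x‖_{p,ℤ/qℤ∖{0̄}}`. -/
noncomputable def normM0 (q : ℕ) (p : ℝ) (x : ZMod q → ℝ) : ℝ :=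
  (∑' i : {i : ZMod q // i ≠ 0}, |x i.1| ^ p) ^ (1 / p)

section FixedPoint

variable {G : Type*} [AddCommGroup G] [Fintype G]

/-- The unnormalized boundary law map `x ↦ a * x ^ d` (convolution on `G`). -/
def blNum (a : G → ℝ) (d : ℕ) (x : G → ℝ) (i : G) : ℝ := ∑ j, a (i - j) * x j ^ d

/-- The normalizing denominator, equal to `blNum a d x 0` when `a` is even. -/
def blDen (a : G → ℝ) (d : ℕ) (x : G → ℝ) : ℝ := ∑ j, a j * x j ^ d

/-- The normalized boundary law map, in terms of the `d`-th root `x` of the boundary law. -/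
def blMap (a : G → ℝ) (d : ℕ) (x : G → ℝ) (i : G) : ℝ := blNum a d x i / blDen a d x

lemma sum_shift (a : G → ℝ) (j : G) : ∑ i, a (i - j) = ∑ i, a i :=
  (Equiv.subRight j).sum_comp a

lemma blNum_zero {a : G → ℝ} {d : ℕ} (heven : ∀ i, a (-i) = a i) (x : G → ℝ) :
    blNum a d x 0 = blDen a d x := by
  simp [blNum, blDen, heven]

variable [DecidableEq G]

/-- Nonnegative functions with value `1` at `0` and `ℓ¹`-mass at most `ε` off `0`. -/
def blSet (G : Type*) [AddCommGroup G] [Fintype G] [DecidableEq G] (ε : ℝ) : Set (G → ℝ) :=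
  {x | (∀ i, 0 ≤ x i) ∧ x 0 = 1 ∧ ∑ i ∈ Finset.univ.erase 0, x i ≤ ε}

lemma blSet_le {ε : ℝ} {x : G → ℝ} (hx : x ∈ blSet G ε) {i : G} (hi : i ≠ 0) : x i ≤ ε :=
  (Finset.single_le_sum (f := x) (fun j _ => hx.1 j)
    (Finset.mem_erase.2 ⟨hi, Finset.mem_univ i⟩)).trans hx.2.2

lemma isCompact_blSet {ε : ℝ} : IsCompact (blSet G ε) := by
  refine IsCompact.of_isClosed_subset
    (isCompact_Icc (a := fun _ : G => (0 : ℝ)) (b := fun _ => max 1 ε)) ?_ ?_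
  · refine IsClosed.inter ?_ (IsClosed.inter ?_ ?_)
    · have : {x : G → ℝ | ∀ i, 0 ≤ x i} = ⋂ i, {x | 0 ≤ x i} := by ext; simp
      change IsClosed {x : G → ℝ | ∀ i, 0 ≤ x i}
      rw [this]
      exact isClosed_iInter fun i => isClosed_le continuous_const (continuous_apply i)
    · exact isClosed_eq (continuous_apply 0) continuous_const
    · exact isClosed_le (continuous_finsetSum _ fun i _ => continuous_apply i) continuous_const
  · intro x hx
    refine ⟨fun i => hx.1 i, fun i => ?_⟩
    by_cases hi : i = 0
    · subst hi
      simp [hx.2.1]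
    · exact (blSet_le hx hi).trans (le_max_right _ _)

lemma blSet_nonempty {ε : ℝ} (hε : 0 < ε) : (blSet G ε).Nonempty := by
  refine ⟨Pi.single 0 1, fun i => ?_, by simp, ?_⟩
  · by_cases hi : i = 0
    · subst hi; simp
    · simp [hi]
  · rw [Finset.sum_eq_zero]
    · exact hε.le
    · intro i hi
      simp [Finset.ne_of_mem_erase hi]

/-- Young's inequality `‖a * u‖₁ ≤ ‖a‖₁ ‖u‖₁`, with `u` and the convolution both restricted to
the nonzero elements. -/
lemma young {a u : G → ℝ} (ha : ∀ i, 0 < a i) (hu : ∀ i, 0 ≤ u i) :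
    ∑ i ∈ Finset.univ.erase 0, ∑ j ∈ Finset.univ.erase 0, a (i - j) * u j
      ≤ (∑ i, a i) * ∑ j ∈ Finset.univ.erase 0, u j := by
  rw [Finset.sum_comm, Finset.mul_sum]
  refine Finset.sum_le_sum fun j _ => ?_
  rw [← Finset.sum_mul, ← sum_shift a j]
  exact mul_le_mul_of_nonneg_right (Finset.sum_le_sum_of_subset_of_nonneg (Finset.erase_subset _ _)
    fun i _ _ => (ha _).le) (hu j)

lemma one_le_blDen {a : G → ℝ} {d : ℕ} {ε : ℝ} (ha : ∀ i, 0 < a i) (ha0 : 1 ≤ a 0) {x : G → ℝ}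
    (hx : x ∈ blSet G ε) : 1 ≤ blDen a d x := by
  have h := Finset.single_le_sum (f := fun j => a j * x j ^ d)
    (fun j _ => mul_nonneg (ha j).le (pow_nonneg (hx.1 j) d)) (Finset.mem_univ (0 : G))
  simp only [hx.2.1, one_pow, mul_one] at h
  exact ha0.trans h

lemma blNum_pos {a : G → ℝ} {d : ℕ} {ε : ℝ} (ha : ∀ i, 0 < a i) {x : G → ℝ}
    (hx : x ∈ blSet G ε) (i : G) : 0 < blNum a d x i := by
  have h := Finset.single_le_sum (f := fun j => a (i - j) * x j ^ d)
    (fun j _ => mul_nonneg (ha _).le (pow_nonneg (hx.1 j) d)) (Finset.mem_univ (0 : G))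
  simp only [hx.2.1, one_pow, mul_one] at h
  exact (ha _).trans_le h

lemma blNum_eq {a : G → ℝ} {d : ℕ} {x : G → ℝ} (h0 : x 0 = 1) (i : G) :
    blNum a d x i = a i + ∑ j ∈ Finset.univ.erase 0, a (i - j) * x j ^ d := by
  rw [blNum, ← Finset.add_sum_erase _ _ (Finset.mem_univ (0 : G))]
  simp [h0]

lemma blDen_eq {a : G → ℝ} {d : ℕ} {x : G → ℝ} (h0 : x 0 = 1) :
    blDen a d x = a 0 + ∑ j ∈ Finset.univ.erase 0, a j * x j ^ d := by
  rw [blDen, ← Finset.add_sum_erase _ _ (Finset.mem_univ (0 : G))]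
  simp [h0]

lemma blMap_zero {a : G → ℝ} {d : ℕ} {ε : ℝ} (ha : ∀ i, 0 < a i) (ha0 : 1 ≤ a 0)
    (heven : ∀ i, a (-i) = a i) {x : G → ℝ} (hx : x ∈ blSet G ε) : blMap a d x 0 = 1 := by
  have := one_le_blDen (d := d) ha ha0 hx
  rw [blMap, blNum_zero heven, div_self (by linarith)]

lemma blMap_mem {a : G → ℝ} {d : ℕ} {γ δ ε : ℝ} (hd : 2 ≤ d) (ha : ∀ i, 0 < a i) (ha0 : 1 ≤ a 0)
    (heven : ∀ i, a (-i) = a i) (hγ : ∑ i, a i = γ) (hδ : ∑ i ∈ Finset.univ.erase 0, a i ≤ δ)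
    (hε : 0 < ε) (h1 : δ + γ * ε ^ d ≤ ε) {x : G → ℝ} (hx : x ∈ blSet G ε) :
    blMap a d x ∈ blSet G ε := by
  have hD := one_le_blDen (d := d) ha ha0 hx
  refine ⟨fun i => div_nonneg (blNum_pos ha hx i).le (by linarith),
    blMap_zero ha ha0 heven hx, ?_⟩
  have hpow : ∑ j ∈ Finset.univ.erase 0, x j ^ d ≤ ε ^ d := by
    obtain ⟨k, rfl⟩ : ∃ k, d = k + 1 := ⟨d - 1, by omega⟩
    calc ∑ j ∈ Finset.univ.erase 0, x j ^ (k + 1)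
        ≤ ∑ j ∈ Finset.univ.erase 0, ε ^ k * x j := by
          refine Finset.sum_le_sum fun j hj => ?_
          rw [pow_succ]
          exact mul_le_mul_of_nonneg_right (pow_le_pow_left₀ (hx.1 j)
            (blSet_le hx (Finset.ne_of_mem_erase hj)) k) (hx.1 j)
      _ ≤ ε ^ k * ε := by
          rw [← Finset.mul_sum]
          exact mul_le_mul_of_nonneg_left hx.2.2 (by positivity)
      _ = ε ^ (k + 1) := (pow_succ _ _).symm
  have hγ0 : 0 ≤ γ := hγ ▸ Finset.sum_nonneg fun i _ => (ha i).le
  calc ∑ i ∈ Finset.univ.erase 0, blMap a d x i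
      ≤ ∑ i ∈ Finset.univ.erase 0, blNum a d x i :=
        Finset.sum_le_sum fun i _ => div_le_self (blNum_pos ha hx i).le hD
    _ = ∑ i ∈ Finset.univ.erase 0, a i
        + ∑ i ∈ Finset.univ.erase 0, ∑ j ∈ Finset.univ.erase 0, a (i - j) * x j ^ d := by
        rw [← Finset.sum_add_distrib]
        exact Finset.sum_congr rfl fun i _ => blNum_eq hx.2.1 i
    _ ≤ δ + γ * ε ^ d := by
        have hy := young (u := fun j => x j ^ d) ha (fun j => pow_nonneg (hx.1 j) d)
        rw [hγ] at hy
        exact add_le_add hδ (hy.trans (mul_le_mul_of_nonneg_left hpow hγ0))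
    _ ≤ ε := h1

/-- Uses the splitting `T x - T y = ((N x - N y) + T y * (D y - D x)) / D x`, in which
`D x ≥ 1` and `T y` has mass at most `ε` off `0`. -/
lemma blMap_contract {a : G → ℝ} {d : ℕ} {γ δ ε : ℝ} (hd : 2 ≤ d) (ha : ∀ i, 0 < a i)
    (ha0 : 1 ≤ a 0) (heven : ∀ i, a (-i) = a i) (hγ : ∑ i, a i = γ)
    (hδ : ∑ i ∈ Finset.univ.erase 0, a i ≤ δ)
    (hε : 0 < ε) (h1 : δ + γ * ε ^ d ≤ ε) {x y : G → ℝ} (hx : x ∈ blSet G ε)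
    (hy : y ∈ blSet G ε) :
    ∑ i ∈ Finset.univ.erase 0, |blMap a d x i - blMap a d y i|
      ≤ (d * γ * ε ^ (d - 1) + d * δ * ε ^ d) * ∑ i ∈ Finset.univ.erase 0, |x i - y i| := by
  have hDx := one_le_blDen (d := d) ha ha0 hx
  have hDy := one_le_blDen (d := d) ha ha0 hy
  have hγ0 : 0 ≤ γ := hγ ▸ Finset.sum_nonneg fun i _ => (ha i).le
  have hδ0 : 0 ≤ δ := (Finset.sum_nonneg fun i _ => (ha i).le).trans hδ
  have hTy := blMap_mem hd ha ha0 heven hγ hδ hε h1 hy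
  set S := ∑ i ∈ Finset.univ.erase 0, |x i - y i| with hS
  have hS0 : 0 ≤ S := Finset.sum_nonneg fun i _ => abs_nonneg _
  have hpt : ∀ j ∈ Finset.univ.erase (0 : G), |x j ^ d - y j ^ d| ≤ d * ε ^ (d - 1) * |x j - y j| := by
    intro j hj
    have hj := Finset.ne_of_mem_erase hj
    have hm : max |x j| |y j| ≤ ε := by
      rw [abs_of_nonneg (hx.1 j), abs_of_nonneg (hy.1 j)]
      exact max_le (blSet_le hx hj) (blSet_le hy hj)
    calc |x j ^ d - y j ^ d| ≤ |x j - y j| * d * max |x j| |y j| ^ (d - 1) := abs_pow_sub_pow_le _ _ _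
      _ ≤ |x j - y j| * d * ε ^ (d - 1) := by gcongr
      _ = _ := by ring
  have hpow : ∑ j ∈ Finset.univ.erase 0, |x j ^ d - y j ^ d| ≤ d * ε ^ (d - 1) * S := by
    rw [hS, Finset.mul_sum]
    exact Finset.sum_le_sum hpt
  have hN : ∑ i ∈ Finset.univ.erase 0, |blNum a d x i - blNum a d y i|
      ≤ γ * (d * ε ^ (d - 1) * S) := by
    have hyo := young (u := fun j => |x j ^ d - y j ^ d|) ha (fun j => abs_nonneg _)
    rw [hγ] at hyo
    refine le_trans (Finset.sum_le_sum fun i _ => ?_)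
      (hyo.trans (mul_le_mul_of_nonneg_left hpow hγ0))
    rw [blNum_eq hx.2.1, blNum_eq hy.2.1, add_sub_add_left_eq_sub, ← Finset.sum_sub_distrib]
    refine (Finset.abs_sum_le_sum_abs _ _).trans (Finset.sum_le_sum fun j _ => ?_)
    rw [← mul_sub, abs_mul, abs_of_pos (ha _)]
  have hD : |blDen a d y - blDen a d x| ≤ δ * (d * ε ^ (d - 1) * S) := by
    rw [abs_sub_comm, blDen_eq hx.2.1, blDen_eq hy.2.1, add_sub_add_left_eq_sub,
      ← Finset.sum_sub_distrib]
    refine (Finset.abs_sum_le_sum_abs _ _).trans ?_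
    calc ∑ j ∈ Finset.univ.erase 0, |a j * x j ^ d - a j * y j ^ d|
        ≤ ∑ j ∈ Finset.univ.erase 0, a j * (d * ε ^ (d - 1) * S) := by
          refine Finset.sum_le_sum fun j hj => ?_
          rw [← mul_sub, abs_mul, abs_of_pos (ha _)]
          refine mul_le_mul_of_nonneg_left (le_trans ?_ hpow) (ha j).le
          exact Finset.single_le_sum (f := fun j => |x j ^ d - y j ^ d|)
            (fun _ _ => abs_nonneg _) hj
      _ ≤ δ * (d * ε ^ (d - 1) * S) := by
          rw [← Finset.sum_mul]
          exact mul_le_mul_of_nonneg_right hδ (by positivity)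
  calc ∑ i ∈ Finset.univ.erase 0, |blMap a d x i - blMap a d y i|
      ≤ ∑ i ∈ Finset.univ.erase 0, (|blNum a d x i - blNum a d y i|
          + blMap a d y i * |blDen a d y - blDen a d x|) := by
        refine Finset.sum_le_sum fun i _ => ?_
        have hsplit : blMap a d x i - blMap a d y i = ((blNum a d x i - blNum a d y i)
            + blMap a d y i * (blDen a d y - blDen a d x)) / blDen a d x := by
          have h1 : blDen a d x ≠ 0 := by linarith
          have h2 : blDen a d y ≠ 0 := by linarith
          simp only [blMap]
          field_simp
          ring
        rw [hsplit, abs_div, abs_of_pos (show 0 < blDen a d x by linarith)]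
        refine (div_le_self (abs_nonneg _) hDx).trans ((abs_add_le _ _).trans ?_)
        rw [abs_mul, abs_of_nonneg (hTy.1 i)]
    _ ≤ γ * (d * ε ^ (d - 1) * S) + ε * (δ * (d * ε ^ (d - 1) * S)) := by
        rw [Finset.sum_add_distrib, ← Finset.sum_mul]
        exact add_le_add hN (mul_le_mul hTy.2.2 hD (abs_nonneg _) hε.le)
    _ = _ := by
        obtain ⟨k, rfl⟩ : ∃ k, d = k + 1 := ⟨d - 1, by omega⟩
        simp only [Nat.add_sub_cancel, pow_succ]
        ring

/-- A minimizer over `blSet G ε` of the `ℓ¹`-displacement is a fixed point of the contraction. -/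
lemma exists_fixed {a : G → ℝ} {d : ℕ} {γ δ ε : ℝ} (hd : 2 ≤ d) (ha : ∀ i, 0 < a i)
    (ha0 : 1 ≤ a 0) (heven : ∀ i, a (-i) = a i) (hγ : ∑ i, a i = γ)
    (hδ : ∑ i ∈ Finset.univ.erase 0, a i ≤ δ)
    (hε : 0 < ε) (h1 : δ + γ * ε ^ d ≤ ε)
    (h2 : d * γ * ε ^ (d - 1) + d * δ * ε ^ d < 1) :
    ∃ x ∈ blSet G ε, blMap a d x = x := by
  have hcont : ContinuousOn (fun x : G → ℝ => ∑ i ∈ Finset.univ.erase 0, |blMap a d x i - x i|)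
      (blSet G ε) := by
    refine continuousOn_finsetSum _ fun i _ => ContinuousOn.abs (ContinuousOn.sub ?_ (by fun_prop))
    refine ContinuousOn.div ?_ ?_ fun x hx => ?_
    · unfold blNum
      fun_prop
    · unfold blDen
      fun_prop
    · have := one_le_blDen (d := d) ha ha0 hx
      linarith
  obtain ⟨x, hx, hmin⟩ := isCompact_blSet.exists_isMinOn (blSet_nonempty hε) hcont
  have hTx := blMap_mem hd ha ha0 heven hγ hδ hε h1 hx
  have hle := hmin hTx
  have hc := blMap_contract hd ha ha0 heven hγ hδ hε h1 hTx hx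
  simp only [Set.mem_ofPred_eq] at hle
  have hS0 : 0 ≤ ∑ i ∈ Finset.univ.erase 0, |blMap a d x i - x i| :=
    Finset.sum_nonneg fun i _ => abs_nonneg _
  have hzero : ∑ i ∈ Finset.univ.erase 0, |blMap a d x i - x i| = 0 := by
    by_contra hne
    have hpos := lt_of_le_of_ne hS0 (Ne.symm hne)
    nlinarith [mul_lt_mul_of_pos_right h2 hpos]
  refine ⟨x, hx, funext fun i => ?_⟩
  by_cases hi : i = 0
  · subst hi
    rw [hTx.2.1, hx.2.1]
  · have := (Finset.sum_eq_zero_iff_of_nonneg fun i _ => abs_nonneg _).1 hzero i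
      (Finset.mem_erase.2 ⟨hi, Finset.mem_univ i⟩)
    exact sub_eq_zero.1 (abs_eq_zero.1 this)

end FixedPoint

lemma Qfuzzy_pos (q : ℕ) {Q : ℤ → ℝ} (hQpos : ∀ j, 0 < Q j) (hQsum : Summable Q) (i : ZMod q) :
    0 < Qfuzzy q Q i := by
  obtain ⟨j, hj⟩ := ZMod.intCast_surjective i
  exact (hQsum.subtype _).tsum_pos (fun j => (hQpos _).le) ⟨j, hj⟩ (hQpos j)

lemma Qfuzzy_zero_ge (q : ℕ) {Q : ℤ → ℝ} (hQpos : ∀ j, 0 < Q j) (hQsum : Summable Q) :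
    Q 0 ≤ Qfuzzy q Q 0 :=
  (hQsum.subtype _).le_tsum (⟨0, by simp⟩ : {j : ℤ // (j : ZMod q) = 0})
    (fun j _ => (hQpos _).le)

lemma Qfuzzy_even (q : ℕ) {Q : ℤ → ℝ} (hQeven : ∀ j, Q (-j) = Q j) (i : ZMod q) :
    Qfuzzy q Q (-i) = Qfuzzy q Q i := by
  let e : {j : ℤ // (j : ZMod q) = i} ≃ {j : ℤ // (j : ZMod q) = -i} :=
    (Equiv.neg ℤ).subtypeEquiv fun j => by simp
  unfold Qfuzzy
  rw [← e.tsum_eq]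
  exact tsum_congr fun j => hQeven j.1

lemma sum_Qfuzzy (q : ℕ) [NeZero q] {Q : ℤ → ℝ} (hQsum : Summable Q) :
    ∑ i, Qfuzzy q Q i = ∑' j, Q j := by
  let e := Equiv.sigmaFiberEquiv (fun j : ℤ => (j : ZMod q))
  have hs : Summable (fun p => Q (e p)) := e.summable_iff.2 hQsum
  rw [← e.tsum_eq Q, hs.tsum_sigma, tsum_fintype]
  rfl

/-- Theorem 3.1, part 1: existence of non-constant `q`-periodic boundary
law solutions for every period `q ≥ 2`, provided the pair of 1-norms of `Q` lies in `G_d`. -/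
theorem stmt12 (d : ℕ) (hd : 2 ≤ d)
    (Q : ℤ → ℝ) (hQpos : ∀ j, 0 < Q j) (hQeven : ∀ j, Q (-j) = Q j)
    (hQ0 : Q 0 = 1) (hQsum : Summable Q)
    (hgood : (normZ 1 Q, normZ0 1 Q) ∈ goodSet d) :
    ∀ q : ℕ, 2 ≤ q → ∃ lam : ZMod q → ℝ,
      (∀ i, 0 < lam i) ∧ lam 0 = 1 ∧ (∀ i : ZMod q, i ≠ 0 → lam i < 1) ∧
      ∀ i : ZMod q, lam i =
        ((∑' j : ZMod q, Qfuzzy q Q (i - j) * lam j) /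
          (∑' j : ZMod q, Qfuzzy q Q j * lam j)) ^ d := by
  intro q hq
  have : NeZero q := ⟨by omega⟩
  have hZ : normZ 1 Q = ∑' j, Q j := by
    simp [normZ, fun j => abs_of_pos (hQpos j)]
  have hZ0 : normZ0 1 Q = ∑' j : {j : ℤ // j ≠ 0}, Q j.1 := by
    simp [normZ0, fun j => abs_of_pos (hQpos j)]
  have hsplit : normZ 1 Q = 1 + normZ0 1 Q := by
    rw [hZ, hZ0, ← hQsum.tsum_subtype_add_tsum_subtype_compl {0}, tsum_singleton, hQ0]
    rfl
  obtain ⟨hγ1, hδ0, ε, hε, h1, h2⟩ := hgood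
  simp only at hγ1 hδ0 h1 h2
  set γ := normZ 1 Q
  set δ := normZ0 1 Q
  have ha := Qfuzzy_pos q hQpos hQsum
  have ha0 : 1 ≤ Qfuzzy q Q 0 := hQ0 ▸ Qfuzzy_zero_ge q hQpos hQsum
  have heven := Qfuzzy_even q hQeven
  have hγ : ∑ i, Qfuzzy q Q i = γ := (sum_Qfuzzy q hQsum).trans hZ.symm
  have hδ : ∑ i ∈ Finset.univ.erase 0, Qfuzzy q Q i ≤ δ := by
    have := Finset.add_sum_erase Finset.univ (Qfuzzy q Q) (Finset.mem_univ 0)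
    linarith
  have hd1 : (2 : ℝ) ≤ d := by exact_mod_cast hd
  have hp1 : 0 ≤ d * γ * ε ^ (d - 1) := by positivity
  have hp2 : 0 ≤ d * δ * ε ^ d := by positivity
  have hε1 : ε < 1 := by
    by_contra! hcon
    have hpow : 1 ≤ ε ^ (d - 1) := one_le_pow₀ hcon
    have h3 : 1 ≤ d * γ := by nlinarith
    nlinarith
  obtain ⟨x, hx, hfix⟩ := exists_fixed hd ha ha0 heven hγ hδ hε h1 (by linarith)
  have hpos : ∀ i, 0 < x i := fun i => by
    rw [← hfix]
    exact div_pos (blNum_pos ha hx i) (zero_lt_one.trans_le (one_le_blDen ha ha0 hx))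
  refine ⟨fun i => x i ^ d, fun i => pow_pos (hpos i) d, by simp [hx.2.1], fun i hi => ?_,
    fun i => ?_⟩
  · exact pow_lt_one₀ (hpos i).le ((blSet_le hx hi).trans_lt hε1) (by omega)
  · rw [tsum_fintype, tsum_fintype]
    exact congrArg (· ^ d) (congrFun hfix i).symm
end
end

section
/- Delocalization of inhomogeneous random walks with non-degenerate steps (core of Theorem 3.3, delocalization part): Let q ≥ 1 be an integer and for each s ∈ ℤ/qℤ let ρ_s : ℤ → [0,1] be a probability mass function (Σ_{j∈ℤ} ρ_s(j) = 1) that is not a Dirac mass, i.e. ρ_s(j₀) < 1 for every j₀ ∈ ℤ. For n ≥ 1, a word s = (s_1, …, s_n) ∈ (ℤ/qℤ)^n and k ∈ ℤ, define the convolution mass (ρ_{s_1} * ⋯ * ρ_{s_n})(k) := Σ_{(x_1,…,x_n)∈ℤ^n, x_1+⋯+x_n = k} Π_{a=1}^n ρ_{s_a}(x_a). Then for every k ∈ ℤ, sup_{s ∈ (ℤ/qℤ)^n} (ρ_{s_1} * ⋯ * ρ_{s_n})(k) → 0 as n → ∞. (Applied with the step distributions ρ^Q_q(·|s̄) of increments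 conditional on the fuzzy chain, this shows that every gradient Gibbs measure built from a q-periodic boundary law delocalizes: the total increment W_n along a path of length n satisfies ν(W_n = k) → 0 for all k.) -/
/-!
The proof is by Fourier inversion. Write `φ_s(t) = ∑_j ρ_s(j) e^{itj}` for the characteristic
function of `ρ_s`. Integrating over a period picks out the mass at `k`
(`measureReal_sum_eq_le`), so that
`(ρ_{s_1} * ⋯ * ρ_{s_n})(k) ≤ (2π)⁻¹ ∫₀^{2π} ∏_a |φ_{s_a}(t)| dt ≤ (2π)⁻¹ ∫₀^{2π} g(t)ⁿ dt`
with `g = max_s |φ_s| ≤ 1`, a bound which does not depend on the word. As `ρ_s` charges two distinct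
points `a ≠ b`, strict convexity of the disc shows that `|φ_s(t)| = 1` forces
`e^{ita} = e^{itb}`, which happens only for countably many `t` (`ae_norm_charInt_lt_one`). Hence
`g < 1` almost everywhere, and `∫ gⁿ → 0` by dominated convergence.
-/

open scoped BigOperators
open Filter Topology

noncomputable section

/-- The mass at `k` of the convolution `ρ_{s_1} * ⋯ * ρ_{s_n}` of the step distributions
along the word `s`: the sum over all `(x_1,…,x_n)` with `x_1 + ⋯ + x_n = k` of
`Π_a ρ_{s_a}(x_a)`. -/
noncomputable def wordConv (q : ℕ) (ρ : ZMod q → ℤ → ℝ) (n : ℕ)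
    (s : Fin n → ZMod q) (k : ℤ) : ℝ :=
  ∑' x : {x : Fin n → ℤ // ∑ a, x a = k}, ∏ a, ρ (s a) (x.1 a)

open MeasureTheory

/-- The characteristic function `t ↦ ∑_j μ{j} e^{itj}` of a measure on `ℤ`. -/
def charInt (μ : Measure ℤ) (t : ℝ) : ℂ :=
  ∫ j : ℤ, Complex.exp (((j : ℂ) * Complex.I) * t) ∂μ

lemma norm_exp_int (j : ℤ) (t : ℝ) : ‖Complex.exp (((j : ℂ) * Complex.I) * t)‖ = 1 := by
  have : ((j : ℂ) * Complex.I) * t = ((j * t : ℝ) : ℂ) * Complex.I := by push_cast; ring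
  rw [this, Complex.norm_exp_ofReal_mul_I]

lemma norm_charInt_le_one (μ : Measure ℤ) [IsProbabilityMeasure μ] (t : ℝ) :
    ‖charInt μ t‖ ≤ 1 := by
  have := norm_integral_le_of_norm_le_const (μ := μ)
    (f := fun j : ℤ => Complex.exp (((j : ℂ) * Complex.I) * t)) (C := 1)
    (Eventually.of_forall fun j => (norm_exp_int j t).le)
  simpa [charInt] using this

lemma continuous_charInt (μ : Measure ℤ) [IsProbabilityMeasure μ] : Continuous (charInt μ) := by
  unfold charInt
  refine continuous_of_dominated (bound := fun _ => 1) (fun t => ?_)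
    (fun t => Eventually.of_forall fun j => (norm_exp_int j t).le) (integrable_const _)
    (Eventually.of_forall fun j => by fun_prop)
  exact (measurable_of_countable _).aestronglyMeasurable

/-- Orthogonality of characters over one period. -/
lemma integral_exp_int (m : ℤ) :
    ∫ t in (0 : ℝ)..(2 * Real.pi), Complex.exp (((m : ℂ) * Complex.I) * t)
      = if m = 0 then (2 * Real.pi : ℂ) else 0 := by
  split_ifs with h
  · subst h; simp
  · rw [integral_exp_mul_complex (by simp [h])]
    have : (m : ℂ) * Complex.I * ((2 * Real.pi : ℝ) : ℂ) = m * (2 * Real.pi * Complex.I) := by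
      push_cast; ring
    rw [this, Complex.exp_int_mul_two_pi_mul_I]
    simp

/-- A measure charging two distinct points has `|φ(t)| < 1` for almost every `t`: equality in the
triangle inequality would force `e^{ita} = e^{itb}`. -/
lemma ae_norm_charInt_lt_one (μ : Measure ℤ) [IsProbabilityMeasure μ] {a b : ℤ} (hab : a ≠ b)
    (ha : μ {a} ≠ 0) (hb : μ {b} ≠ 0) : ∀ᵐ t : ℝ, ‖charInt μ t‖ < 1 := by
  have hd : ((a : ℝ) - b) ≠ 0 := sub_ne_zero.2 (by exact_mod_cast hab)
  have hc : (Set.range fun m : ℤ => (m : ℝ) * (2 * Real.pi) / (a - b)).Countable :=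
    Set.countable_range _
  filter_upwards [hc.ae_notMem volume] with t ht
  rcases ae_eq_const_or_norm_integral_lt_of_norm_le_const (μ := μ)
    (f := fun j : ℤ => Complex.exp (((j : ℂ) * Complex.I) * t)) (C := 1)
    (Eventually.of_forall fun j => (norm_exp_int j t).le) with h | h
  · exfalso
    -- An almost sure identity holds at every atom.
    have key : ∀ c : ℤ, μ {c} ≠ 0 → Complex.exp (((c : ℂ) * Complex.I) * t)
        = ⨍ j : ℤ, Complex.exp (((j : ℂ) * Complex.I) * t) ∂μ := by
      intro c hc
      by_contra hne
      refine hc (measure_mono_null ?_ (ae_iff.1 h))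
      rintro _ rfl
      exact hne
    obtain ⟨m, hm⟩ := Complex.exp_eq_exp_iff_exists_int.1 ((key a ha).trans (key b hb).symm)
    refine ht ⟨m, ?_⟩
    have h2 : ((a : ℂ) - b) * t = m * (2 * Real.pi) := by
      apply mul_right_cancel₀ Complex.I_ne_zero
      linear_combination hm
    have h3 : ((a : ℝ) - b) * t = m * (2 * Real.pi) := by exact_mod_cast h2
    show (m : ℝ) * (2 * Real.pi) / (a - b) = t
    rw [← h3]
    field_simp
  · simpa [charInt] using h

/-- Fourier inversion: the mass at `k` of a sum of independent integer steps is at most the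
normalized integral over a period of the product of the moduli of the characteristic functions. -/
lemma measureReal_sum_eq_le {n : ℕ} (μ : Fin n → Measure ℤ) [∀ a, IsProbabilityMeasure (μ a)]
    (k : ℤ) : (Measure.pi μ).real {x | ∑ a, x a = k}
      ≤ (2 * Real.pi)⁻¹ * ∫ t in (0 : ℝ)..(2 * Real.pi), ∏ a, ‖charInt (μ a) t‖ := by
  set P := Measure.pi μ
  have hpi : (0 : ℝ) < 2 * Real.pi := by positivity
  have hswap : ∫ t in (0 : ℝ)..(2 * Real.pi), ∫ x : Fin n → ℤ,
        Complex.exp ((((∑ a, x a - k : ℤ) : ℂ) * Complex.I) * t) ∂P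
      = ∫ x : Fin n → ℤ, (∫ t in (0 : ℝ)..(2 * Real.pi),
        Complex.exp ((((∑ a, x a - k : ℤ) : ℂ) * Complex.I) * t)) ∂P := by
    apply intervalIntegral_integral_swap
    rw [Set.uIoc_of_le hpi.le]
    refine Integrable.of_bound (C := 1) ?_ (Eventually.of_forall fun p => (norm_exp_int _ _).le)
    refine Measurable.aestronglyMeasurable ?_
    refine Complex.measurable_exp.comp ?_
    refine Measurable.mul ?_ (Complex.measurable_ofReal.comp measurable_fst)
    exact (measurable_of_countable
      (fun x : Fin n → ℤ => ((∑ a, x a - k : ℤ) : ℂ) * Complex.I)).comp measurable_snd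
  have hright : ∫ x : Fin n → ℤ, (∫ t in (0 : ℝ)..(2 * Real.pi),
        Complex.exp ((((∑ a, x a - k : ℤ) : ℂ) * Complex.I) * t)) ∂P
      = ((2 * Real.pi * P.real {x | ∑ a, x a = k} : ℝ) : ℂ) := by
    have hms : MeasurableSet {x : Fin n → ℤ | ∑ a, x a = k} := Set.to_countable _ |>.measurableSet
    have : ∀ x : Fin n → ℤ, (∫ t in (0 : ℝ)..(2 * Real.pi),
        Complex.exp ((((∑ a, x a - k : ℤ) : ℂ) * Complex.I) * t))
        = Set.indicator {x : Fin n → ℤ | ∑ a, x a = k} (fun _ => (2 * Real.pi : ℂ)) x := by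
      intro x
      rw [integral_exp_int]
      simp [Set.indicator_apply, sub_eq_zero]
    simp_rw [this]
    rw [integral_indicator hms, setIntegral_const]
    simp [mul_comm]
  have hleft : ∀ t : ℝ, ‖∫ x : Fin n → ℤ,
        Complex.exp ((((∑ a, x a - k : ℤ) : ℂ) * Complex.I) * t) ∂P‖
      = ∏ a, ‖charInt (μ a) t‖ := by
    intro t
    have : ∀ x : Fin n → ℤ, Complex.exp ((((∑ a, x a - k : ℤ) : ℂ) * Complex.I) * t)
        = Complex.exp (((((-k : ℤ) : ℂ)) * Complex.I) * t)
          * ∏ a, Complex.exp (((x a : ℂ) * Complex.I) * t) := by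
      intro x
      rw [← Complex.exp_sum, ← Complex.exp_add, ← Finset.sum_mul, ← Finset.sum_mul]
      congr 1
      push_cast
      ring
    simp_rw [this]
    rw [integral_const_mul, norm_mul, norm_exp_int, one_mul,
      integral_fintype_prod_eq_prod
        (fun (_ : Fin n) (j : ℤ) => Complex.exp (((j : ℂ) * Complex.I) * t)), norm_prod]
    rfl
  have h := intervalIntegral.norm_integral_le_integral_norm (μ := volume)
    (f := fun t : ℝ => ∫ x : Fin n → ℤ,
        Complex.exp ((((∑ a, x a - k : ℤ) : ℂ) * Complex.I) * t) ∂P) hpi.le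
  simp_rw [hleft] at h
  rw [hswap, hright, Complex.norm_real, Real.norm_of_nonneg (by positivity)] at h
  rw [inv_mul_eq_div, le_div_iff₀ hpi]
  linarith

/-- The convolution mass is the probability that independent steps with laws `μ (s a)` add up
to `k`. -/
lemma wordConv_eq_measureReal {q : ℕ} {ρ : ZMod q → ℤ → ℝ} (hnn : ∀ s j, 0 ≤ ρ s j)
    (μ : ZMod q → Measure ℤ) [∀ s, IsProbabilityMeasure (μ s)]
    (hμ : ∀ s j, μ s {j} = ENNReal.ofReal (ρ s j)) (n : ℕ) (s : Fin n → ZMod q) (k : ℤ) :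
    wordConv q ρ n s k = (Measure.pi fun a => μ (s a)).real {x | ∑ a, x a = k} := by
  have h := tsum_measure_preimage_singleton (μ := Measure.pi fun a => μ (s a))
    (Set.to_countable {x : Fin n → ℤ | ∑ a, x a = k}) (f := id)
    (fun y _ => by simp)
  rw [Set.preimage_id] at h
  rw [measureReal_def, ← h, ENNReal.tsum_toReal_eq (fun b => measure_ne_top _ _)]
  refine tsum_congr fun x => ?_
  rw [Set.preimage_id, Measure.pi_singleton, ENNReal.toReal_prod]
  exact Finset.prod_congr rfl fun a _ => by rw [hμ, ENNReal.toReal_ofReal (hnn _ _)]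

lemma exists_two_atoms {f : ℤ → ℝ} (hsum : HasSum f 1) (hnd : ∀ j, f j < 1) :
    ∃ a b, a ≠ b ∧ f a ≠ 0 ∧ f b ≠ 0 := by
  obtain ⟨a, ha⟩ : ∃ a, f a ≠ 0 := by
    by_contra! h
    exact one_ne_zero (hsum.unique (by simp [funext h, hasSum_zero]))
  by_contra! h
  have := hsum.unique (hasSum_single a fun b hb => h a b hb.symm ha)
  linarith [hnd a]

/-- core of Theorem 3.3, delocalization part: delocalization of
inhomogeneous random walks with non-degenerate steps. If each `ρ_s` is a probability mass
function on `ℤ` that is not a Dirac mass, then for every `k ∈ ℤ` the supremum over words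
`s ∈ (ℤ/qℤ)^n` of the convolution mass `(ρ_{s_1} * ⋯ * ρ_{s_n})(k)` tends to `0` as
`n → ∞`. -/
theorem stmt15 (q : ℕ) (hq : 1 ≤ q) (ρ : ZMod q → ℤ → ℝ)
    (hnn : ∀ s j, 0 ≤ ρ s j) (hle : ∀ s j, ρ s j ≤ 1)
    (hsum : ∀ s, HasSum (ρ s) 1)
    (hnd : ∀ (s : ZMod q) (j₀ : ℤ), ρ s j₀ < 1) :
    ∀ k : ℤ,
      Tendsto (fun n : ℕ => ⨆ s : Fin n → ZMod q, wordConv q ρ n s k)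
        atTop (𝓝 0) := by
  intro k
  have : NeZero q := ⟨by omega⟩
  -- The laws of the steps, as measures on `ℤ`.
  let p : ZMod q → PMF ℤ := fun s => ⟨fun j => ENNReal.ofReal (ρ s j), by
    have h := ENNReal.ofReal_tsum_of_nonneg (hnn s) (hsum s).summable
    rw [(hsum s).tsum_eq, ENNReal.ofReal_one] at h
    rw [h]
    exact ENNReal.summable.hasSum⟩
  let μ : ZMod q → Measure ℤ := fun s => (p s).toMeasure
  have hprob : ∀ s, IsProbabilityMeasure (μ s) := fun s => inferInstanceAs
    (IsProbabilityMeasure (p s).toMeasure)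
  have hμ : ∀ s j, μ s {j} = ENNReal.ofReal (ρ s j) := fun s j =>
    (p s).toMeasure_apply_singleton j (by simp)
  have hne : (Finset.univ : Finset (ZMod q)).Nonempty := Finset.univ_nonempty
  let g : ℝ → ℝ := fun t => Finset.univ.sup' hne fun s => ‖charInt (μ s) t‖
  have hg_cont : Continuous g :=
    Continuous.finset_sup'_apply hne fun s _ => (continuous_charInt (μ s)).norm
  have hg_ge : ∀ s t, ‖charInt (μ s) t‖ ≤ g t := fun s t =>
    Finset.le_sup' (fun s => ‖charInt (μ s) t‖) (Finset.mem_univ s)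
  have hg_nn : ∀ t, 0 ≤ g t := fun t => (norm_nonneg _).trans (hg_ge 0 t)
  have hg_le : ∀ t, g t ≤ 1 := fun t =>
    Finset.sup'_le hne _ fun s _ => norm_charInt_le_one (μ s) t
  have hg_lt : ∀ᵐ t : ℝ, g t < 1 := by
    have : ∀ s, ∀ᵐ t : ℝ, ‖charInt (μ s) t‖ < 1 := by
      intro s
      obtain ⟨a, b, hab, ha, hb⟩ := exists_two_atoms (hsum s) (hnd s)
      have hpos : ∀ j, ρ s j ≠ 0 → μ s {j} ≠ 0 := fun j hj => by
        rw [hμ]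
        exact (ENNReal.ofReal_pos.2 (lt_of_le_of_ne (hnn s j) hj.symm)).ne'
      exact ae_norm_charInt_lt_one (μ s) hab (hpos a ha) (hpos b hb)
    filter_upwards [ae_all_iff.2 this] with t ht
    exact (Finset.sup'_lt_iff hne).2 fun s _ => ht s
  have hlim : Tendsto (fun n : ℕ => (2 * Real.pi)⁻¹ * ∫ t in (0 : ℝ)..(2 * Real.pi), g t ^ n)
      atTop (𝓝 0) := by
    have h := intervalIntegral.tendsto_integral_filter_of_dominated_convergence (μ := volume)
      (a := 0) (b := 2 * Real.pi) (l := atTop) (F := fun (n : ℕ) t => g t ^ n) (f := fun _ => 0)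
      (fun _ => (1 : ℝ)) (Eventually.of_forall fun n => (hg_cont.pow n).aestronglyMeasurable)
      (Eventually.of_forall fun n => Eventually.of_forall fun t _ => by
        rw [Real.norm_of_nonneg (pow_nonneg (hg_nn t) n)]
        exact pow_le_one₀ (hg_nn t) (hg_le t))
      (by simp)
      (by
        filter_upwards [hg_lt] with t ht _
        exact tendsto_pow_atTop_nhds_zero_of_lt_one (hg_nn t) ht)
    simpa using h.const_mul (2 * Real.pi)⁻¹
  have hconv := wordConv_eq_measureReal hnn μ hμ
  refine squeeze_zero (fun n => Real.iSup_nonneg fun s => ?_) (fun n => ciSup_le fun s => ?_) hlim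
  · rw [hconv]
    exact measureReal_nonneg
  · rw [hconv]
    refine (measureReal_sum_eq_le (fun a => μ (s a)) k).trans ?_
    refine mul_le_mul_of_nonneg_left ?_ (by positivity)
    refine intervalIntegral.integral_mono (by positivity) ?_ ?_ fun t => ?_
    · exact (continuous_finsetProd _ fun a _ =>
        (continuous_charInt (μ (s a))).norm).intervalIntegrable _ _
    · exact (hg_cont.pow n).intervalIntegrable _ _
    · calc ∏ a, ‖charInt (μ (s a)) t‖ ≤ ∏ _a : Fin n, g t :=
            Finset.prod_le_prod (fun _ _ => norm_nonneg _) fun a _ => hg_ge (s a) t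
        _ = g t ^ n := by simp
end
end

section
/- Localization of the increment distribution along a path for localized Gibbs measures (second part of Theorem 3.3): Fix an integer d ≥ 2. Let Q : ℤ → (0,∞) be even, let λ : ℤ → (0,∞) satisfy Σ_{i∈ℤ} λ(i)^{(d+1)/d} < ∞, and suppose there is c > 0 such that Σ_{j∈ℤ} Q(i−j) λ(j) = c · λ(i)^{1/d} for every i ∈ ℤ. Define P(i,j) := Q(i−j) λ(j) / (Σ_{l∈ℤ} Q(i−l) λ(l)), the n-step kernels P^1 := P and P^{n+1}(i,j) := Σ_{l∈ℤ} P^n(i,l) P(l,j), and α(i) := λ(i)^{(d+1)/d} / Σ_{l∈ℤ} λ(l)^{(d+1)/d}. Then for every k ∈ ℤ, lim_{n→∞} Σ_{i∈ℤ} α(i) P^n(i, i+k) = Σ_{i∈ℤ} α(i) α(i+k) > 0. (The left-hand side equals ν(W_n = k), the probability under the gradient projection ν of the Gibbs measure associated to λ that the total increment along a path of length n equals k; hence ν is localized.) -/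
/-!
Fix a starting point `i`. The density `f n j = α i / α j * P^n(i,j)` of the chain with respect to
`α`, scaled by `α i`, evolves by detailed balance as `f (n+1) = P (f n)`, starting from the
indicator of `i`. For such a
bounded sequence the energy `∑ α (f n)²` is nonincreasing, and its decrement is the `α`-average of
the variances of `f n` under `P x ·`. The decrements tend to `0` and `P > 0`, so
`f n j - f (n+1) x → 0` for all `j` and `x` (`tendsto_sub`). Stationarity keeps `∑ α (f n)`
constant, so dominated convergence identifies the limit of `f n x` as `∑ α (f 0) = α i`
(`tendsto_mean`), which is the convergence `P^n(i,j) → α j`. Since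
`α i * P^n(i, i+k) = α (i+k) * f n (i+k) ≤ α (i+k)`, a second dominated convergence, in `i`, gives
the claim.
-/

open scoped BigOperators
open Filter Topology

noncomputable section

/-- The transition kernel `P(i,j) = Q(i−j) λ(j) / Σ_l Q(i−l) λ(l)` of the height chain. -/
noncomputable def heightP (Q lam : ℤ → ℝ) (i j : ℤ) : ℝ :=
  Q (i - j) * lam j / ∑' l : ℤ, Q (i - l) * lam l

/-- The stationary vector `α(i) = λ(i)^{(d+1)/d} / Σ_l λ(l)^{(d+1)/d}`. -/
noncomputable def heightAlpha (d : ℕ) (lam : ℤ → ℝ) (i : ℤ) : ℝ :=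
  lam i ^ (((d : ℝ) + 1) / (d : ℝ)) / ∑' l : ℤ, lam l ^ (((d : ℝ) + 1) / (d : ℝ))

/-- The `n`-step kernels of a kernel `P` on `ℤ`: `P^0 = id`, `P^{n+1}(i,j) = Σ_l P^n(i,l) P(l,j)`
(so `P^1 = P`). -/
noncomputable def kernelPow (P : ℤ → ℤ → ℝ) : ℕ → ℤ → ℤ → ℝ
  | 0 => fun i j => if i = j then 1 else 0
  | n + 1 => fun i j => ∑' l : ℤ, kernelPow P n i l * P l j

/-- A strictly positive stochastic kernel on `ℤ` in detailed balance with a strictly positive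
probability vector. -/
structure RevChain (P : ℤ → ℤ → ℝ) (a : ℤ → ℝ) : Prop where
  ppos : ∀ i j, 0 < P i j
  psum : ∀ i, HasSum (P i) 1
  apos : ∀ i, 0 < a i
  asum : HasSum a 1
  rev : ∀ i j, a i * P i j = a j * P j i

namespace RevChain

variable {P : ℤ → ℤ → ℝ} {a : ℤ → ℝ}

lemma summable_weight {w g : ℤ → ℝ} (hw : Summable w) (hw0 : ∀ i, 0 ≤ w i)
    (hg : ∀ i, 0 ≤ g i ∧ g i ≤ 1) : Summable fun i => w i * g i :=
  Summable.of_nonneg_of_le (fun i => mul_nonneg (hw0 i) (hg i).1)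
    (fun i => mul_le_of_le_one_right (hw0 i) (hg i).2) hw

lemma psummable (h : RevChain P a) {g : ℤ → ℝ} (hg : ∀ i, 0 ≤ g i ∧ g i ≤ 1) (i : ℤ) :
    Summable fun j => P i j * g j :=
  summable_weight (h.psum i).summable (fun j => (h.ppos i j).le) hg

lemma step_bounds (h : RevChain P a) {g : ℤ → ℝ} (hg : ∀ i, 0 ≤ g i ∧ g i ≤ 1) (i : ℤ) :
    0 ≤ ∑' j, P i j * g j ∧ ∑' j, P i j * g j ≤ 1 := by
  refine ⟨tsum_nonneg fun j => mul_nonneg (h.ppos i j).le (hg j).1, ?_⟩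
  rw [← (h.psum i).tsum_eq]
  exact (h.psummable hg i).tsum_le_tsum
    (fun j => mul_le_of_le_one_right (h.ppos i j).le (hg j).2) (h.psum i).summable

/-- Stationarity of `a`, tested against functions with values in `[0,1]`. -/
lemma stationary (h : RevChain P a) {g : ℤ → ℝ} (hg : ∀ i, 0 ≤ g i ∧ g i ≤ 1) :
    ∑' i, a i * ∑' j, P i j * g j = ∑' j, a j * g j := by
  have hs : Summable (Function.uncurry fun i j => a i * (P i j * g j)) := by
    rw [summable_prod_of_nonneg]
    · refine ⟨fun i => (h.psummable hg i).mul_left (a i), ?_⟩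
      simp only [Function.uncurry, tsum_mul_left]
      exact summable_weight h.asum.summable (fun i => (h.apos i).le) (h.step_bounds hg)
    · rintro ⟨i, j⟩
      exact mul_nonneg (h.apos i).le (mul_nonneg (h.ppos i j).le (hg j).1)
  calc ∑' i, a i * ∑' j, P i j * g j = ∑' i, ∑' j, a i * (P i j * g j) := by
        simp only [tsum_mul_left]
    _ = ∑' j, ∑' i, a i * (P i j * g j) := hs.tsum_comm.symm
    _ = ∑' j, a j * g j := by
        refine tsum_congr fun j => ?_
        have : ∀ i, a i * (P i j * g j) = (a j * g j) * P j i := fun i => by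
          rw [← mul_assoc, h.rev i j]; ring
        simp only [this, tsum_mul_left, (h.psum j).tsum_eq, mul_one]

/-- The drop of the energy `∑ a g²` under one step of the chain, being the `a`-average of the
variances of `g` under `P x ·`, bounds each single term of these variances. -/
lemma energy_drop (h : RevChain P a) {g : ℤ → ℝ} (hg : ∀ i, 0 ≤ g i ∧ g i ≤ 1) (x j : ℤ) :
    a x * (P x j * (g j - ∑' l, P x l * g l) ^ 2) ≤
      ∑' i, a i * g i ^ 2 - ∑' i, a i * (∑' l, P i l * g l) ^ 2 := by
  have hg2 : ∀ i, 0 ≤ g i ^ 2 ∧ g i ^ 2 ≤ 1 := fun i =>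
    ⟨sq_nonneg _, pow_le_one₀ (hg i).1 (hg i).2⟩
  have hPg := h.step_bounds hg
  have hPg2 : ∀ i, 0 ≤ (∑' l, P i l * g l) ^ 2 ∧ (∑' l, P i l * g l) ^ 2 ≤ 1 := fun i =>
    ⟨sq_nonneg _, pow_le_one₀ (hPg i).1 (hPg i).2⟩
  have hvar : ∀ i, HasSum (fun j => P i j * (g j - ∑' l, P i l * g l) ^ 2)
      (∑' l, P i l * g l ^ 2 - (∑' l, P i l * g l) ^ 2) := fun i => by
    set m := ∑' l, P i l * g l with hm
    have h1 := (h.psummable hg2 i).hasSum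
    have h2 := ((h.psummable hg i).hasSum).mul_left (2 * m)
    have h3 := (h.psum i).mul_left (m ^ 2)
    rw [← hm] at h2
    have hfun : (fun j => P i j * (g j - m) ^ 2) =
        fun j => P i j * g j ^ 2 - 2 * m * (P i j * g j) + m ^ 2 * P i j := by
      funext j; ring
    have hval : ∑' l, P i l * g l ^ 2 - m ^ 2 =
        ∑' l, P i l * g l ^ 2 - 2 * m * m + m ^ 2 * 1 := by ring
    rw [hfun, hval]
    exact (h1.sub h2).add h3
  have s1 := summable_weight h.asum.summable (fun i => (h.apos i).le) (h.step_bounds hg2)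
  have s2 := summable_weight h.asum.summable (fun i => (h.apos i).le) hPg2
  rw [← h.stationary hg2, ← s1.tsum_sub s2]
  have hvar0 : ∀ i, 0 ≤ ∑' l, P i l * g l ^ 2 - (∑' l, P i l * g l) ^ 2 := fun i =>
    (hvar i).nonneg fun j => mul_nonneg (h.ppos i j).le (sq_nonneg _)
  calc a x * (P x j * (g j - ∑' l, P x l * g l) ^ 2)
      ≤ a x * (∑' l, P x l * g l ^ 2 - (∑' l, P x l * g l) ^ 2) := by
        refine mul_le_mul_of_nonneg_left ?_ (h.apos x).le
        exact le_hasSum (hvar x) j fun l _ => mul_nonneg (h.ppos x l).le (sq_nonneg _)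
    _ = a x * (∑' l, P x l * g l ^ 2) - a x * (∑' l, P x l * g l) ^ 2 := by ring
    _ ≤ _ := (s1.sub s2).le_tsum x fun i _ => by
        rw [← mul_sub]; exact mul_nonneg (h.apos i).le (hvar0 i)

variable {f : ℕ → ℤ → ℝ}

lemma iterate_bounds (h : RevChain P a) (h0 : ∀ i, 0 ≤ f 0 i ∧ f 0 i ≤ 1)
    (hf : ∀ n i, f (n + 1) i = ∑' j, P i j * f n j) (n : ℕ) :
    ∀ i, 0 ≤ f n i ∧ f n i ≤ 1 := by
  induction n with
  | zero => exact h0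
  | succ n ih => intro i; rw [hf]; exact h.step_bounds ih i

lemma tendsto_sub (h : RevChain P a) (h0 : ∀ i, 0 ≤ f 0 i ∧ f 0 i ≤ 1)
    (hf : ∀ n i, f (n + 1) i = ∑' j, P i j * f n j) (x j : ℤ) :
    Tendsto (fun n => f n j - f (n + 1) x) atTop (𝓝 0) := by
  have hb := h.iterate_bounds h0 hf
  set E : ℕ → ℝ := fun n => ∑' i, a i * f n i ^ 2 with hE
  have hdrop : ∀ n (x j : ℤ), a x * (P x j * (f n j - f (n + 1) x) ^ 2) ≤ E n - E (n + 1) := by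
    intro n x j
    have := h.energy_drop (hb n) x j
    simpa only [hE, hf] using this
  have hanti : Antitone E := antitone_nat_of_succ_le fun n => by
    have h1 := hdrop n x j
    have h2 : 0 ≤ a x * (P x j * (f n j - f (n + 1) x) ^ 2) :=
      mul_nonneg (h.apos x).le (mul_nonneg (h.ppos x j).le (sq_nonneg _))
    linarith
  have hbdd : BddBelow (Set.range E) := ⟨0, by
    rintro _ ⟨n, rfl⟩
    exact tsum_nonneg fun i => mul_nonneg (h.apos i).le (sq_nonneg _)⟩
  have hlim := tendsto_atTop_ciInf hanti hbdd
  have hdiff : Tendsto (fun n => E n - E (n + 1)) atTop (𝓝 0) := by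
    simpa using hlim.sub (hlim.comp (tendsto_add_atTop_nat 1))
  have hpos : 0 < a x * P x j := mul_pos (h.apos x) (h.ppos x j)
  have hsq : Tendsto (fun n => (f n j - f (n + 1) x) ^ 2) atTop (𝓝 0) := by
    refine squeeze_zero (fun n => sq_nonneg _) (fun n => ?_)
      (by simpa using hdiff.div_const (a x * P x j))
    rw [le_div_iff₀ hpos]
    have := hdrop n x j
    linarith
  rw [tendsto_zero_iff_abs_tendsto_zero]
  simpa [Function.comp_def, Real.sqrt_sq_eq_abs] using hsq.sqrt

lemma tendsto_mean (h : RevChain P a) (h0 : ∀ i, 0 ≤ f 0 i ∧ f 0 i ≤ 1)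
    (hf : ∀ n i, f (n + 1) i = ∑' j, P i j * f n j) (x : ℤ) :
    Tendsto (fun n => f n x) atTop (𝓝 (∑' i, a i * f 0 i)) := by
  have hb := h.iterate_bounds h0 hf
  have hmean : ∀ n, ∑' i, a i * f n i = ∑' i, a i * f 0 i := by
    intro n
    induction n with
    | zero => rfl
    | succ n ih => simp only [hf]; rw [h.stationary (hb n), ih]
  have hdc : Tendsto (fun n => ∑' j, a j * (f n j - f (n + 1) x)) atTop
      (𝓝 (∑' j : ℤ, a j * 0)) := by
    refine tendsto_tsum_of_dominated_convergence (bound := a) h.asum.summable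
      (fun j => (h.tendsto_sub h0 hf x j).const_mul (a j)) (Eventually.of_forall fun n j => ?_)
    rw [Real.norm_eq_abs, abs_mul, abs_of_pos (h.apos j)]
    refine mul_le_of_le_one_right (h.apos j).le (abs_le.2 ⟨?_, ?_⟩)
    · linarith [(hb n j).1, (hb (n + 1) x).2]
    · linarith [(hb n j).2, (hb (n + 1) x).1]
  have heq : ∀ n, ∑' j, a j * (f n j - f (n + 1) x) = ∑' i, a i * f 0 i - f (n + 1) x := by
    intro n
    have s := summable_weight h.asum.summable (fun i => (h.apos i).le) (hb n)
    simp only [mul_sub]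
    rw [s.tsum_sub (h.asum.summable.mul_right _), tsum_mul_right, h.asum.tsum_eq, one_mul, hmean]
  simp only [heq, mul_zero, tsum_zero] at hdc
  refine (tendsto_add_atTop_iff_nat 1).1 ?_
  simpa using hdc.const_sub (∑' i, a i * f 0 i)

/-- By detailed balance, the scaled density `a i / a j * P^n(i,j)` evolves by the kernel `P` itself. -/
lemma density_step (h : RevChain P a) (i : ℤ) (n : ℕ) (j : ℤ) :
    a i / a j * kernelPow P (n + 1) i j =
      ∑' l, P j l * (a i / a l * kernelPow P n i l) := by
  rw [kernelPow, ← tsum_mul_left]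
  refine tsum_congr fun l => ?_
  have h1 := (h.apos j).ne'
  have h2 := (h.apos l).ne'
  field_simp
  linear_combination a i * kernelPow P n i l * h.rev l j

lemma density_zero (h : RevChain P a) (i j : ℤ) :
    a i / a j * kernelPow P 0 i j = if j = i then 1 else 0 := by
  rcases eq_or_ne j i with rfl | hji
  · simp [kernelPow, (h.apos j).ne']
  · simp [kernelPow, hji, hji.symm]

lemma density_zero_bounds (h : RevChain P a) (i j : ℤ) :
    0 ≤ a i / a j * kernelPow P 0 i j ∧ a i / a j * kernelPow P 0 i j ≤ 1 := by
  rw [h.density_zero]; split_ifs <;> norm_num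

lemma tendsto_weighted (h : RevChain P a) (i j : ℤ) :
    Tendsto (fun n => a i * kernelPow P n i j) atTop (𝓝 (a i * a j)) := by
  have := (h.tendsto_mean (f := fun n j => a i / a j * kernelPow P n i j)
    (h.density_zero_bounds i) (h.density_step i) j).const_mul (a j)
  simp only [h.density_zero, mul_ite, mul_one, mul_zero, tsum_ite_eq] at this
  rw [mul_comm (a j)] at this
  refine this.congr fun n => ?_
  have := (h.apos j).ne'
  field_simp

lemma weighted_bounds (h : RevChain P a) (n : ℕ) (i j : ℤ) :
    0 ≤ a i * kernelPow P n i j ∧ a i * kernelPow P n i j ≤ a j := by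
  have := h.iterate_bounds (f := fun n j => a i / a j * kernelPow P n i j)
    (h.density_zero_bounds i) (h.density_step i) n j
  have hj := h.apos j
  have e : a i * kernelPow P n i j = a j * (a i / a j * kernelPow P n i j) := by field_simp
  rw [e]
  exact ⟨mul_nonneg hj.le this.1, mul_le_of_le_one_right hj.le this.2⟩

end RevChain

lemma revChain_height (d : ℕ) (hd : 2 ≤ d)
    (Q : ℤ → ℝ) (hQpos : ∀ j, 0 < Q j) (hQeven : ∀ j, Q (-j) = Q j)
    (lam : ℤ → ℝ) (hlam : ∀ i, 0 < lam i)
    (hnorm : Summable fun i : ℤ => lam i ^ (((d : ℝ) + 1) / (d : ℝ)))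
    (c : ℝ) (hc : 0 < c)
    (hbl : ∀ i : ℤ, ∑' j : ℤ, Q (i - j) * lam j = c * lam i ^ ((1 : ℝ) / (d : ℝ))) :
    RevChain (heightP Q lam) (heightAlpha d lam) := by
  have hSpos : ∀ i, 0 < ∑' j : ℤ, Q (i - j) * lam j := fun i => by
    rw [hbl]; exact mul_pos hc (Real.rpow_pos_of_pos (hlam i) _)
  -- A sum that is not summable would have the value `0`.
  have hSsum : ∀ i, Summable fun j : ℤ => Q (i - j) * lam j := fun i => by
    by_contra hns
    exact (hSpos i).ne' (tsum_eq_zero_of_not_summable hns)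
  have hpow : ∀ i, 0 < lam i ^ (((d : ℝ) + 1) / (d : ℝ)) := fun i =>
    Real.rpow_pos_of_pos (hlam i) _
  have hZ : 0 < ∑' l : ℤ, lam l ^ (((d : ℝ) + 1) / (d : ℝ)) :=
    hnorm.tsum_pos (fun i => (hpow i).le) 0 (hpow 0)
  have hd0 : (d : ℝ) ≠ 0 := by
    have : d ≠ 0 := by omega
    exact_mod_cast this
  have hsplit : ∀ i, lam i ^ (((d : ℝ) + 1) / (d : ℝ)) = lam i * lam i ^ ((1 : ℝ) / (d : ℝ)) := by
    intro i
    rw [add_div, div_self hd0, Real.rpow_add (hlam i), Real.rpow_one]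
  have hflow : ∀ i j, heightAlpha d lam i * heightP Q lam i j =
      lam i * lam j * Q (i - j) / (c * ∑' l : ℤ, lam l ^ (((d : ℝ) + 1) / (d : ℝ))) := by
    intro i j
    have h1 := (Real.rpow_pos_of_pos (hlam i) ((1 : ℝ) / (d : ℝ))).ne'
    rw [heightAlpha, heightP, hbl, hsplit i]
    generalize lam i ^ ((1 : ℝ) / (d : ℝ)) = r at *
    have := hZ.ne'
    have := hc.ne'
    generalize ∑' l : ℤ, lam l ^ (((d : ℝ) + 1) / (d : ℝ)) = z at *
    field_simp
  refine ⟨fun i j => div_pos (mul_pos (hQpos _) (hlam j)) (hSpos i), fun i => ?_,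
    fun i => div_pos (hpow i) hZ, ?_, fun i j => ?_⟩
  · have := (hSsum i).hasSum.div_const (∑' j : ℤ, Q (i - j) * lam j)
    rwa [div_self (hSpos i).ne'] at this
  · have := hnorm.hasSum.div_const (∑' l : ℤ, lam l ^ (((d : ℝ) + 1) / (d : ℝ)))
    rwa [div_self hZ.ne'] at this
  · rw [hflow, hflow, ← hQeven (i - j), neg_sub, mul_comm (lam i)]

/-- second part of Theorem 3.3: localization of the increment
distribution along a path for localized Gibbs measures: for every `k`,
`ν(W_n = k) = Σ_i α(i) P^n(i, i+k) → Σ_i α(i) α(i+k) > 0` as `n → ∞`. -/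
theorem stmt17 (d : ℕ) (hd : 2 ≤ d)
    (Q : ℤ → ℝ) (hQpos : ∀ j, 0 < Q j) (hQeven : ∀ j, Q (-j) = Q j)
    (lam : ℤ → ℝ) (hlam : ∀ i, 0 < lam i)
    (hnorm : Summable fun i : ℤ => lam i ^ (((d : ℝ) + 1) / (d : ℝ)))
    (c : ℝ) (hc : 0 < c)
    (hbl : ∀ i : ℤ, ∑' j : ℤ, Q (i - j) * lam j = c * lam i ^ ((1 : ℝ) / (d : ℝ))) :
    ∀ k : ℤ,
      Tendsto
        (fun n : ℕ => ∑' i : ℤ, heightAlpha d lam i * kernelPow (heightP Q lam) n i (i + k))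
        atTop (𝓝 (∑' i : ℤ, heightAlpha d lam i * heightAlpha d lam (i + k))) ∧
      0 < ∑' i : ℤ, heightAlpha d lam i * heightAlpha d lam (i + k) := by
  intro k
  have h := revChain_height d hd Q hQpos hQeven lam hlam hnorm c hc hbl
  have hshift : Summable fun i : ℤ => heightAlpha d lam (i + k) :=
    (Equiv.addRight k).summable_iff.2 h.asum.summable
  constructor
  · refine tendsto_tsum_of_dominated_convergence hshift
      (fun i => h.tendsto_weighted i (i + k)) (Eventually.of_forall fun n i => ?_)
    have := h.weighted_bounds n i (i + k)
    rw [Real.norm_eq_abs, abs_of_nonneg this.1]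
    exact this.2
  · have hpos : ∀ i, 0 < heightAlpha d lam i * heightAlpha d lam (i + k) := fun i =>
      mul_pos (h.apos _) (h.apos _)
    refine Summable.tsum_pos ?_ (fun i => (hpos i).le) 0 (hpos 0)
    refine Summable.of_nonneg_of_le (fun i => (hpos i).le) (fun i => ?_) hshift
    exact mul_le_of_le_one_left (h.apos _).le
      (le_hasSum h.asum i fun j _ => (h.apos j).le)
end
end

section
/- Large-degree existence of localized states (analytic content of Theorem 4.2, part 1): Let U : ℤ^k → [0,∞) be even with U(0) = 0 and v := inf_{j∈ℤ^k∖{0}} U(j) > 0, and fix A > 1/v. For d ≥ 2 set β_{A,d} := A · log d / (d+1) and Q_β(j) := exp(−β U(j)). Assume ‖Q_{β_{A,d}}‖_{(d+1)/2, ℤ^k} < ∞ for some d ≥ 2 (equivalently, Σ_{j∈ℤ^k} d^{−A U(j)/2} < ∞ for some d ≥ 2). Then there exists d₀ ≥ 2 such that for every d ≥ d₀ and every β ≥ β_{A,d}, the pair (‖Q_β‖_{(d+1)/2, ℤ^k}, ‖Q_β‖_{d+1, ℤ^k∖{0}}) lies in the good set G_d; in particular, for each such d and β a family of distinct tree-automorphism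 invariant Gibbs measures (μ_i)_{i∈ℤ^k} exists. -/
/-!
Write `L = log d` and fix exponents `1 < b < a < A v`. Let `d₁` be a degree with
`M = ∑ j, d₁ ^ (-A U(j) / 2) < ∞`.

For `β ≥ A L / (d + 1)` and `d ≥ d₁` one has `γ ^ ((d + 1) / 2) ≤ ∑ j, d ^ (-A U(j) / 2) ≤ M`,
hence `γ ≤ 2` for large `d`. Since `U ≥ v` off the origin,
`d ^ (-A U) ≤ d ^ (-a) * d ^ (-(A - a / v) U)`, and the last factor is at most
`d₁ ^ (-A U / 2)` for large `d`; this gives `δ ^ (d + 1) ≤ M d ^ (-a)`.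

The radius `ε = d ^ (-b / (d + 1))` then witnesses membership in the good set:
`ε ^ (d - 1) ≤ 3 d ^ (-b)` is `o(1 / d)`, which settles the contraction condition, while
`δ / ε ≤ (M d ^ (b - a)) ^ (1 / (d + 1)) ≤ exp (-1 / (d + 1)) ≤ 1 - 1 / (d + 2)` leaves enough
room for the term `γ ε ^ (d - 1)` in the self-mapping condition. These estimates form
`mem_goodSet_of_bounds`; the bounds on `γ` and `δ` are supplied in the proof of `stmt18`.
-/

open scoped BigOperators
open Filter Topology

noncomputable section

/-- The integer lattice `ℤ^k`. -/
abbrev ZkL (k : ℕ) := Fin k → ℤ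

/-- The punctured integer lattice `ℤ^k ∖ {0}`, as a subtype. -/
abbrev ZkP (k : ℕ) := {j : ZkL k // j ≠ 0}

/-- The `p`-norm `‖x‖_{p, ℤ^k}` of a function on all of `ℤ^k`. -/
noncomputable def normFull (k : ℕ) (p : ℝ) (x : ZkL k → ℝ) : ℝ :=
  (∑' j : ZkL k, |x j| ^ p) ^ (1 / p)

/-- The `p`-norm `‖x‖_{p, ℤ^k ∖ {0}}` of a function on `ℤ^k`, restricted to nonzero sites. -/
noncomputable def normPunct (k : ℕ) (p : ℝ) (x : ZkL k → ℝ) : ℝ :=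
  (∑' j : ZkP k, |x j.1| ^ p) ^ (1 / p)

/-- The `p`-norm of a function defined on `ℤ^k ∖ {0}`. -/
noncomputable def norm0 (k : ℕ) (p : ℝ) (x : ZkP k → ℝ) : ℝ :=
  (∑' j : ZkP k, |x j| ^ p) ^ (1 / p)

/-- `γ := ‖Q‖_{(d+1)/2, ℤ^k}`. -/
noncomputable def gam (k d : ℕ) (Q : ZkL k → ℝ) : ℝ := normFull k (((d : ℝ) + 1) / 2) Q

/-- `δ := ‖Q‖_{d+1, ℤ^k ∖ {0}}`. -/
noncomputable def del (k d : ℕ) (Q : ZkL k → ℝ) : ℝ := normPunct k ((d : ℝ) + 1) Q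

/-- Membership in `D`: an element of `ℓ^{d+1}(ℤ^k ∖ {0})` with nonnegative entries. -/
def memD (k d : ℕ) (x : ZkP k → ℝ) : Prop :=
  Summable (fun j : ZkP k => |x j| ^ ((d : ℝ) + 1)) ∧ ∀ j : ZkP k, 0 ≤ x j

/-- The operator `T`:
`T(x)(i) = (Q(i) + Σ_{j≠0} Q(i−j) x(j)^d) / (1 + Σ_{j≠0} Q(j) x(j)^d)`. -/
noncomputable def opT (k d : ℕ) (Q : ZkL k → ℝ) (x : ZkP k → ℝ) (i : ZkL k) : ℝ :=
  (Q i + ∑' j : ZkP k, Q (i - j.1) * x j ^ d) /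
  (1 + ∑' j : ZkP k, Q j.1 * x j ^ d)

/-- If `γ ≤ 2` and `δ ^ (d + 1) ≤ exp l * d ^ (-a)`, then for `d` large compared with `l`, `a`, `b`
(as quantified by `h2`, `h3`, `h4`) the radius `ε = d ^ (-b / (d + 1))` shows that `(γ, δ)` is good. -/
lemma mem_goodSet_of_bounds (d : ℕ) (hd : 2 ≤ d) (γ δ a b l : ℝ) (hb : 1 < b)
    (hγ1 : 1 < γ) (hγ2 : γ ≤ 2) (hδ0 : 0 < δ)
    (hδ : δ ≤ Real.exp ((l - a * Real.log d) / ((d : ℝ) + 1)))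
    (h2 : 2 * b * Real.log d ≤ (d : ℝ) + 1)
    (h3 : 18 * Real.exp ((1 - b) * Real.log d) < 1)
    (h4 : l + 1 ≤ (a - b) * Real.log d) : (γ, δ) ∈ goodSet d := by
  have hd' : (2 : ℝ) ≤ d := by exact_mod_cast hd
  have hn : (0 : ℝ) < (d : ℝ) + 1 := by linarith
  have hL : 0 ≤ Real.log d := Real.log_nonneg (by linarith)
  set L := Real.log d with hLdef
  set ε : ℝ := Real.exp (-b * L / ((d : ℝ) + 1)) with hε
  have hε0 : 0 < ε := Real.exp_pos _
  have hε1 : ε ≤ 1 := by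
    rw [hε, Real.exp_le_one_iff]
    apply div_nonpos_of_nonpos_of_nonneg _ hn.le
    nlinarith
  set t := Real.exp ((1 - b) * L) with ht
  have ht0 : 0 < t := Real.exp_pos _
  have hdexp : (d : ℝ) = Real.exp L := by rw [hLdef, Real.exp_log (by linarith)]
  have hpow : (d : ℝ) * ε ^ (d - 1) ≤ 3 * t := by
    have h1 : ε ^ (d - 1) = Real.exp (-b * L + 2 * b * L / ((d : ℝ) + 1)) := by
      rw [hε, ← Real.exp_nat_mul]
      congr 1
      rw [Nat.cast_sub (by omega)]
      push_cast
      field_simp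
      ring
    have h5 : (d : ℝ) * ε ^ (d - 1) = t * Real.exp (2 * b * L / ((d : ℝ) + 1)) := by
      calc (d : ℝ) * ε ^ (d - 1)
          = Real.exp L * Real.exp (-b * L + 2 * b * L / ((d : ℝ) + 1)) := by rw [h1, ← hdexp]
        _ = _ := by rw [ht, ← Real.exp_add, ← Real.exp_add]; congr 1; ring
    have h6 : Real.exp (2 * b * L / ((d : ℝ) + 1)) ≤ 3 := by
      calc _ ≤ Real.exp 1 := Real.exp_le_exp.mpr (by rw [div_le_one hn]; exact h2)
        _ ≤ 3 := by have := Real.exp_one_lt_d9; linarith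
    rw [h5]
    nlinarith
  have hpe : 0 < ε ^ (d - 1) := pow_pos hε0 _
  have hsucc : ε ^ d = ε ^ (d - 1) * ε := by
    rw [← pow_succ]; congr 1; omega
  have hratio : δ ≤ ε * (1 - 1 / ((d : ℝ) + 2)) := by
    have h1 : Real.exp ((l - a * L) / ((d : ℝ) + 1)) ≤ ε * Real.exp (-(1 / ((d : ℝ) + 1))) := by
      rw [hε, ← Real.exp_add, Real.exp_le_exp, ← sub_nonneg]
      have : -b * L / ((d : ℝ) + 1) + -(1 / ((d : ℝ) + 1)) - (l - a * L) / ((d : ℝ) + 1)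
          = ((a - b) * L - l - 1) / ((d : ℝ) + 1) := by ring
      rw [this]
      exact div_nonneg (by linarith) hn.le
    have h7 : Real.exp (-(1 / ((d : ℝ) + 1))) ≤ 1 - 1 / ((d : ℝ) + 2) := by
      have h8 := Real.add_one_le_exp (1 / ((d : ℝ) + 1))
      rw [Real.exp_neg]
      have h9 : 1 - 1 / ((d : ℝ) + 2) = (1 / ((d : ℝ) + 1) + 1)⁻¹ := by field_simp; ring
      rw [h9]
      exact inv_anti₀ (by positivity) h8
    exact hδ.trans (h1.trans (mul_le_mul_of_nonneg_left h7 hε0.le))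
  have hsmall : γ * ε ^ (d - 1) ≤ 1 / ((d : ℝ) + 2) := by
    rw [le_div_iff₀ (by linarith)]
    nlinarith [mul_le_mul_of_nonneg_right hγ2 hpe.le]
  refine ⟨hγ1, hδ0, ε, hε0, ?_, ?_⟩
  · change δ + γ * ε ^ d ≤ ε
    rw [hsucc]
    nlinarith
  · change 2 * (d : ℝ) * γ * ε ^ (d - 1) + 2 * d * δ * ε ^ d < 1
    have hδ1 : δ ≤ 1 := by
      have : 0 < 1 / ((d : ℝ) + 2) := by positivity
      nlinarith
    have hdp : 0 < (d : ℝ) * ε ^ (d - 1) := by positivity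
    have e1 : 2 * (d : ℝ) * γ * ε ^ (d - 1) ≤ 2 * 2 * (d * ε ^ (d - 1)) := by nlinarith
    have e2 : 2 * (d : ℝ) * δ * ε ^ d ≤ 2 * (d * ε ^ (d - 1)) := by
      have : δ * ε ≤ 1 := mul_le_one₀ hδ1 hε0.le hε1
      rw [hsucc]
      nlinarith
    linarith

/-- The five conditions on `d` used below hold for all large `d`. -/
lemma eventually_large_degree (a b c l C : ℝ) (hb : 1 < b) (hab : b < a) (hc : 0 < c) :
    ∀ᶠ d : ℕ in atTop, l ≤ ((d : ℝ) + 1) / 2 * Real.log 2 ∧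
      2 * b * Real.log d ≤ (d : ℝ) + 1 ∧
      18 * Real.exp ((1 - b) * Real.log d) < 1 ∧
      l + 1 ≤ (a - b) * Real.log d ∧ C ≤ c * Real.log d := by
  have hcast : Tendsto (fun d : ℕ => (d : ℝ)) atTop atTop := tendsto_natCast_atTop_atTop
  have hlog : Tendsto (fun d : ℕ => Real.log d) atTop atTop := Real.tendsto_log_atTop.comp hcast
  have e1 : ∀ᶠ d : ℕ in atTop, 2 * l / Real.log 2 ≤ (d : ℝ) := hcast.eventually_ge_atTop _
  have e2 : ∀ᶠ d : ℕ in atTop, ‖Real.log d‖ ≤ (1 / (2 * b)) * ‖(d : ℝ)‖ :=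
    hcast.eventually (Real.isLittleO_log_id_atTop.bound (by positivity))
  have e3 : ∀ᶠ d : ℕ in atTop, Real.log 18 / (b - 1) < Real.log d := hlog.eventually_gt_atTop _
  have e4 : ∀ᶠ d : ℕ in atTop, (l + 1) / (a - b) ≤ Real.log d := hlog.eventually_ge_atTop _
  have e5 : ∀ᶠ d : ℕ in atTop, C / c ≤ Real.log d := hlog.eventually_ge_atTop _
  filter_upwards [e1, e2, e3, e4, e5] with d h1 h2 h3 h4 h5
  have hl2 : 0 < Real.log 2 := Real.log_pos (by norm_num)
  rw [div_le_iff₀ hl2] at h1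
  rw [div_lt_iff₀ (by linarith)] at h3
  rw [div_le_iff₀ (by linarith)] at h4
  rw [div_le_iff₀ hc] at h5
  refine ⟨by linarith, ?_, ?_, by linarith, by linarith⟩
  · have h6 := (le_abs_self _).trans h2
    rw [Real.norm_of_nonneg (Nat.cast_nonneg d), one_div, inv_mul_eq_div,
      le_div_iff₀ (by linarith)] at h6
    linarith
  · have h18 : (18 : ℝ) = Real.exp (Real.log 18) := (Real.exp_log (by norm_num)).symm
    rw [h18, ← Real.exp_add, Real.exp_lt_one_iff]
    linarith

/-- analytic content of Theorem 4.2, part 1: large-degree existence of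
localized states. With `v := inf_{j≠0} U(j) > 0`, `A > 1/v`, `β_{A,d} := A log d/(d+1)`,
and `Q_β := exp(−βU)` with finite `(d+1)/2`-norm for some `d ≥ 2`, there is `d₀ ≥ 2` such
that for all `d ≥ d₀` and all `β ≥ β_{A,d}` the pair
`(‖Q_β‖_{(d+1)/2,ℤ^k}, ‖Q_β‖_{d+1,ℤ^k∖{0}})` lies in `G_d` (and hence a family of distinct
tree-automorphism invariant Gibbs measures `(μ_i)` exists). -/
theorem stmt18 (k : ℕ) (hk : 1 ≤ k)
    (U : ZkL k → ℝ) (hUnn : ∀ j, 0 ≤ U j) (hUeven : ∀ j, U (-j) = U j) (hU0 : U 0 = 0)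
    (v : ℝ) (hv : IsGLB {y : ℝ | ∃ j : ZkL k, j ≠ 0 ∧ y = U j} v) (hvpos : 0 < v)
    (A : ℝ) (hA : 1 / v < A)
    (hfin : ∃ d : ℕ, 2 ≤ d ∧ Summable fun j : ZkL k =>
      Real.exp (-(A * Real.log d / ((d : ℝ) + 1)) * U j) ^ (((d : ℝ) + 1) / 2)) :
    ∃ d₀ : ℕ, 2 ≤ d₀ ∧ ∀ d : ℕ, d₀ ≤ d →
      ∀ β : ℝ, A * Real.log d / ((d : ℝ) + 1) ≤ β →
        (gam k d (fun j => Real.exp (-β * U j)),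
         del k d (fun j => Real.exp (-β * U j))) ∈ goodSet d := by
  obtain ⟨d₁, hd₁, hsum⟩ := hfin
  have hAv : 1 < A * v := by rwa [div_lt_iff₀ hvpos] at hA
  have hA0 : 0 < A := lt_trans (by positivity) hA
  have hUv : ∀ j : ZkL k, j ≠ 0 → v ≤ U j := fun j hj => hv.1 ⟨j, hj, rfl⟩
  -- Two exponents strictly between `1` and `A v`.
  obtain ⟨b, hb1, hbA⟩ := exists_between hAv
  obtain ⟨a, hba, haA⟩ := exists_between hbA
  have hd₁' : (2 : ℝ) ≤ d₁ := by exact_mod_cast hd₁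
  set C : ℝ := A * Real.log d₁ / 2 with hC
  have hf : Summable fun j : ZkL k => Real.exp (-C * U j) := by
    refine hsum.congr fun j => ?_
    rw [← Real.exp_mul]
    congr 1
    rw [hC]
    field_simp
  set M : ℝ := ∑' j : ZkL k, Real.exp (-C * U j) with hM
  have hM1 : 1 ≤ M := by
    have := hf.le_tsum 0 (fun j _ => (Real.exp_pos _).le)
    rwa [hU0, mul_zero, Real.exp_zero] at this
  have hM0 : 0 < M := by linarith
  have hc : 0 < A - a / v := by
    rw [sub_pos, div_lt_iff₀ hvpos]; exact haA
  obtain ⟨D, hD⟩ := eventually_atTop.mp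
    (eventually_large_degree a b (A - a / v) (Real.log M) C hb1 hba hc)
  refine ⟨max D (max d₁ 2), by simp, fun d hd β hβ => ?_⟩
  obtain ⟨hdD, hdd₁, hd2⟩ : D ≤ d ∧ d₁ ≤ d ∧ 2 ≤ d := by simpa using hd
  obtain ⟨g1, g2, g3, g4, g5⟩ := hD d hdD
  have hd2' : (2 : ℝ) ≤ d := by exact_mod_cast hd2
  have hn : (0 : ℝ) < (d : ℝ) + 1 := by linarith
  have hLL : Real.log d₁ ≤ Real.log d :=
    Real.log_le_log (by linarith) (by exact_mod_cast hdd₁)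
  have hβn : A * Real.log d ≤ β * ((d : ℝ) + 1) := (div_le_iff₀ hn).mp hβ
  have habs : ∀ (p : ℝ) (j : ZkL k),
      |Real.exp (-β * U j)| ^ p = Real.exp (-(β * p) * U j) := fun p j => by
    rw [abs_of_pos (Real.exp_pos _), ← Real.exp_mul]; congr 1; ring
  -- A nonzero site, which exists because `1 ≤ k`.
  obtain ⟨e, he⟩ : ∃ e : ZkL k, e ≠ 0 :=
    ⟨fun _ => 1, fun h => one_ne_zero (congrFun h ⟨0, hk⟩)⟩
  have hgle : ∀ j : ZkL k,
      Real.exp (-(β * (((d : ℝ) + 1) / 2)) * U j) ≤ Real.exp (-C * U j) := fun j => by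
    apply Real.exp_le_exp.mpr
    apply mul_le_mul_of_nonneg_right _ (hUnn j)
    rw [hC]
    nlinarith [mul_le_mul_of_nonneg_left hLL hA0.le]
  have hgs : Summable fun j : ZkL k => Real.exp (-(β * (((d : ℝ) + 1) / 2)) * U j) :=
    Summable.of_nonneg_of_le (fun j => (Real.exp_pos _).le) hgle hf
  have hgM : ∑' j : ZkL k, Real.exp (-(β * (((d : ℝ) + 1) / 2)) * U j) ≤ M :=
    hgs.tsum_le_tsum hgle hf
  have hg1 : 1 < ∑' j : ZkL k, Real.exp (-(β * (((d : ℝ) + 1) / 2)) * U j) := by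
    have h := hgs.sum_le_tsum {0, e} (fun j _ => (Real.exp_pos _).le)
    rw [Finset.sum_pair he.symm, hU0, mul_zero, Real.exp_zero] at h
    linarith [Real.exp_pos (-(β * (((d : ℝ) + 1) / 2)) * U e)]
  have hγ1 : 1 < gam k d (fun j => Real.exp (-β * U j)) := by
    simp only [gam, normFull, habs]
    exact Real.one_lt_rpow hg1 (by positivity)
  have hγ2 : gam k d (fun j => Real.exp (-β * U j)) ≤ 2 := by
    simp only [gam, normFull, habs]
    rw [one_div, Real.rpow_inv_le_iff_of_pos (by linarith) (by norm_num) (by positivity)]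
    refine hgM.trans ?_
    rw [Real.rpow_def_of_pos (by norm_num), ← Real.log_le_iff_le_exp hM0]
    linarith
  -- Off the origin, `U ≥ v` splits off the factor `d ^ (-a)`.
  have hdle : ∀ j : ZkP k, Real.exp (-(β * ((d : ℝ) + 1)) * U j.1) ≤
      Real.exp (-a * Real.log d) * Real.exp (-C * U j.1) := fun j => by
    rw [← Real.exp_add, Real.exp_le_exp]
    have hL0 : 0 ≤ Real.log d := Real.log_nonneg (by linarith)
    have k1 : a ≤ a / v * U j.1 := by
      calc a = a / v * v := by field_simp
        _ ≤ _ := mul_le_mul_of_nonneg_left (hUv j.1 j.2) (div_nonneg (by linarith) hvpos.le)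
    have k2 := mul_le_mul_of_nonneg_right k1 hL0
    have k3 := mul_le_mul_of_nonneg_right g5 (hUnn j.1)
    have k4 := mul_le_mul_of_nonneg_right hβn (hUnn j.1)
    nlinarith
  have hfP : Summable fun j : ZkP k => Real.exp (-C * U j.1) :=
    hf.comp_injective Subtype.val_injective
  have hds : Summable fun j : ZkP k => Real.exp (-(β * ((d : ℝ) + 1)) * U j.1) :=
    Summable.of_nonneg_of_le (fun j => (Real.exp_pos _).le) hdle (hfP.mul_left _)
  have hdM : ∑' j : ZkP k, Real.exp (-(β * ((d : ℝ) + 1)) * U j.1) ≤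
      Real.exp (-a * Real.log d) * M := by
    refine (hds.tsum_le_tsum hdle (hfP.mul_left _)).trans ?_
    rw [tsum_mul_left]
    refine mul_le_mul_of_nonneg_left ?_ (Real.exp_pos _).le
    exact hf.tsum_subtype_le _ {j : ZkL k | j ≠ 0} (fun j => (Real.exp_pos _).le)
  have hd0 : 0 < ∑' j : ZkP k, Real.exp (-(β * ((d : ℝ) + 1)) * U j.1) :=
    hds.tsum_pos (fun j => (Real.exp_pos _).le) ⟨e, he⟩ (Real.exp_pos _)
  have hδ0 : 0 < del k d (fun j => Real.exp (-β * U j)) := by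
    simp only [del, normPunct, habs]
    exact Real.rpow_pos_of_pos hd0 _
  have hδ : del k d (fun j => Real.exp (-β * U j)) ≤
      Real.exp ((Real.log M - a * Real.log d) / ((d : ℝ) + 1)) := by
    simp only [del, normPunct, habs]
    rw [one_div, Real.rpow_inv_le_iff_of_pos hd0.le (Real.exp_pos _).le hn, ← Real.exp_mul,
      div_mul_cancel₀ _ hn.ne', sub_eq_add_neg, Real.exp_add, Real.exp_log hM0]
    calc _ ≤ _ := hdM
      _ = _ := by rw [mul_comm, neg_mul]
  exact mem_goodSet_of_bounds d hd2 _ _ a b (Real.log M) hb1 hγ1 hγ2 hδ0 hδ g2 g3 g4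
end
end

section
/- Large-degree concentration bound (analytic content of Theorem 4.2, part 2): Let U : ℤ^k → [0,∞) be even with U(0) = 0 and v := inf_{j∈ℤ^k∖{0}} U(j) > 0, fix A > 1/v, set β_{A,d} := A · log d / (d+1) and Q_β(j) := exp(−β U(j)), and assume ‖Q_{β_{A,d}}‖_{(d+1)/2, ℤ^k} < ∞ for some d ≥ 2. Then there exist a constant C > 0 and d₀ ≥ 2 such that for every d ≥ d₀ and every β ≥ β_{A,d}, the unique fixed point x of the operator T (formed from Q := Q_β) in the good-set ball satisfies ‖x‖_{d+1, ℤ^k∖{0}}^{d+1} ≤ C/d; equivalently, the associated normalized boundary law λ = x^d (extended by λ(0)=1) satisfies Σ_{j∈ℤ^k∖{0}} λ(j)^{(d+1)/d} ≤ C/d, which equals the Gibbs-measure ratio μ_i(σ_0 ≠ i)/μ_i(σ_0 = i) and tends to 0 as d → ∞. -/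
/-!
Write `n = d + 1`, `a = ‖x‖_n`. The denominator of `T` is at least `1`, so Minkowski's inequality
and Young's convolution inequality `‖Q * x^d‖_n ≤ ‖Q‖_{n/2} ‖x^d‖_{n/d}` give
`a ≤ δ + γ a ^ d` for every fixed point `x` (`fixed_point_norm_le`). Since `a ≤ ε` and
`2 d γ ε ^ (d - 1) < 1`, the last term is at most `a / (2 d)`; hence `(1 - 1 / (2 d)) a ≤ δ`, and
Bernoulli's inequality yields `a ^ n ≤ 4 δ ^ n` (`pow_le_of_le_add`).

It remains to see that `δ ^ n = O(1 / d)`. Let `D` be a degree for which the norm is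
finite, so that `S = ∑ D ^ (-A U(j) / 2) < ∞`. For `d ≥ D` and `j ≠ 0` one has `A U(j) ≥ A v ≥ 1`,
so `Q(j) ^ n ≤ d ^ (-A U(j)) ≤ (D / d) * D ^ (-A U(j) / 2)`, and summing gives `δ ^ n ≤ D S / d`.
Thus `C = 4 D S` and `d₀ = D` work.

The inequalities for sums are proved in `ℝ≥0∞`, where no summability has to be tracked.
-/

open scoped BigOperators
open Filter Topology

noncomputable section

open scoped ENNReal

/-- Young's convolution inequality with exponents `(d + 1) / 2` and `(d + 1) / d`, for `q` and
`y ^ d`, raised to the power `d + 1`. -/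
lemma conv_bound (k d : ℕ) (hd : 2 ≤ d) (q : ZkL k → ℝ≥0∞) (y : ZkP k → ℝ≥0∞) :
    ∑' i : ZkP k, (∑' j : ZkP k, q (i.1 - j.1) * y j ^ d) ^ ((d : ℝ) + 1) ≤
      (∑' j, q j ^ (((d : ℝ) + 1) / 2)) ^ 2 * (∑' j, y j ^ ((d : ℝ) + 1)) ^ d := by
  set n : ℝ := (d : ℝ) + 1 with hn
  have hd' : (2 : ℝ) ≤ d := by exact_mod_cast hd
  have hn0 : 0 < n := by linarith
  set G := ∑' j, q j ^ (n / 2)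
  set X := ∑' j, y j ^ n
  have hG1 : ∀ i : ZkP k, ∑' j : ZkP k, q (i.1 - j.1) ^ (n / 2) ≤ G := fun i =>
    ENNReal.tsum_comp_le_tsum_of_injective
      (f := fun j : ZkP k => i.1 - j.1) (fun a b h => Subtype.ext (sub_right_injective h))
      (fun j => q j ^ (n / 2))
  have hG2 : ∀ j : ZkP k, ∑' i : ZkP k, q (i.1 - j.1) ^ (n / 2) ≤ G := fun j =>
    ENNReal.tsum_comp_le_tsum_of_injective
      (f := fun i : ZkP k => i.1 - j.1) (fun a b h => Subtype.ext (sub_left_injective h))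
      (fun j => q j ^ (n / 2))
  have key : ∀ i : ZkP k, (∑' j : ZkP k, q (i.1 - j.1) * y j ^ d) ^ n ≤
      (∑' j : ZkP k, q (i.1 - j.1) ^ (n / 2) * y j ^ n) * G * X ^ (n - 2) := by
    intro i
    -- Three-fold Hölder for the splitting
    -- `q y ^ d = (q ^ (n / 2) y ^ n) ^ (1 / n) * (q ^ (n / 2)) ^ (1 / n) * (y ^ n) ^ ((n - 2) / n)`.
    have H := ENNReal.lintegral_prod_norm_pow_le (μ := MeasureTheory.Measure.count)
      (Finset.univ : Finset (Fin 3))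
      (f := ![fun j : ZkP k => q (i.1 - j.1) ^ (n / 2) * y j ^ n,
        fun j => q (i.1 - j.1) ^ (n / 2), fun j => y j ^ n])
      (fun _ _ => (measurable_of_countable _).aemeasurable)
      (p := ![1 / n, 1 / n, (n - 2) / n])
      (by simp [Fin.sum_univ_three]; field_simp; ring)
      (by
        intro m _
        fin_cases m
        · simp; positivity
        · simp; positivity
        · simp; exact div_nonneg (by linarith) hn0.le)
    simp only [MeasureTheory.lintegral_count, Fin.prod_univ_three] at H
    simp only [Matrix.cons_val_zero, Matrix.cons_val_one, Matrix.cons_val] at H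
    have e : ∀ j : ZkP k, (q (i.1 - j.1) ^ (n / 2) * y j ^ n) ^ (1 / n) *
        (q (i.1 - j.1) ^ (n / 2)) ^ (1 / n) * (y j ^ n) ^ ((n - 2) / n) =
        q (i.1 - j.1) * y j ^ d := by
      intro j
      rw [ENNReal.mul_rpow_of_nonneg _ _ (by positivity)]
      simp only [← ENNReal.rpow_mul]
      have h1 : n / 2 * (1 / n) = 1 / 2 := by field_simp
      have h2 : n * (1 / n) = 1 := by field_simp
      have h3 : n * ((n - 2) / n) = n - 2 := by field_simp
      rw [h1, h2, h3]
      have h4 : q (i.1 - j.1) ^ (1 / 2 : ℝ) * q (i.1 - j.1) ^ (1 / 2 : ℝ) = q (i.1 - j.1) := by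
        rw [← ENNReal.rpow_add_of_nonneg _ _ (by norm_num) (by norm_num)]; norm_num
      have h5 : y j ^ (1 : ℝ) * y j ^ (n - 2) = y j ^ d := by
        rw [← ENNReal.rpow_add_of_nonneg _ _ (by norm_num) (by linarith), ← ENNReal.rpow_natCast]
        congr 1; rw [hn]; ring
      calc _ = (q (i.1 - j.1) ^ (1 / 2 : ℝ) * q (i.1 - j.1) ^ (1 / 2 : ℝ)) *
            (y j ^ (1 : ℝ) * y j ^ (n - 2)) := by ring
        _ = _ := by rw [h4, h5]
    simp only [e] at H
    refine (ENNReal.rpow_le_rpow H hn0.le).trans ?_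
    rw [ENNReal.mul_rpow_of_nonneg _ _ hn0.le, ENNReal.mul_rpow_of_nonneg _ _ hn0.le]
    simp only [← ENNReal.rpow_mul]
    have h2 : 1 / n * n = 1 := by field_simp
    have h3 : (n - 2) / n * n = n - 2 := by field_simp
    rw [h2, h3, ENNReal.rpow_one, ENNReal.rpow_one]
    gcongr
    exact hG1 i
  calc _ ≤ ∑' i : ZkP k, (∑' j : ZkP k, q (i.1 - j.1) ^ (n / 2) * y j ^ n) * G * X ^ (n - 2) :=
        ENNReal.tsum_le_tsum key
    _ = (∑' j : ZkP k, (∑' i : ZkP k, q (i.1 - j.1) ^ (n / 2)) * y j ^ n) * G * X ^ (n - 2) := by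
        simp only [ENNReal.tsum_mul_right]
        rw [ENNReal.tsum_comm]
        simp only [ENNReal.tsum_mul_right]
    _ ≤ (∑' j : ZkP k, G * y j ^ n) * G * X ^ (n - 2) := by
        gcongr with j
        exact hG2 j
    _ = G ^ 2 * (X ^ (1 : ℝ) * X ^ (n - 2)) := by
        rw [ENNReal.tsum_mul_left, ENNReal.rpow_one]; ring
    _ = _ := by
        rw [← ENNReal.rpow_add_of_nonneg _ _ (by norm_num) (by linarith), ← ENNReal.rpow_natCast X]
        congr 2; rw [hn]; ring

/-- A function dominated by `q + q * y ^ d` has `ℓ^{d+1}` norm at most `δ + γ ‖y‖ ^ d`, by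
Minkowski's inequality and `conv_bound`. -/
lemma norm_bound (k d : ℕ) (hd : 2 ≤ d) (q : ZkL k → ℝ≥0∞) (y : ZkP k → ℝ≥0∞)
    (h : ∀ i : ZkP k, y i ≤ q i.1 + ∑' j : ZkP k, q (i.1 - j.1) * y j ^ d) :
    (∑' j, y j ^ ((d : ℝ) + 1)) ^ (1 / ((d : ℝ) + 1)) ≤
      (∑' j : ZkP k, q j.1 ^ ((d : ℝ) + 1)) ^ (1 / ((d : ℝ) + 1)) +
      (∑' j, q j ^ (((d : ℝ) + 1) / 2)) ^ (1 / (((d : ℝ) + 1) / 2)) *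
        ((∑' j, y j ^ ((d : ℝ) + 1)) ^ (1 / ((d : ℝ) + 1))) ^ d := by
  have hn0 : (0 : ℝ) < (d : ℝ) + 1 := by positivity
  have M := ENNReal.lintegral_Lp_add_le (μ := MeasureTheory.Measure.count) (p := (d : ℝ) + 1)
    (f := fun i : ZkP k => q i.1) (g := fun i : ZkP k => ∑' j : ZkP k, q (i.1 - j.1) * y j ^ d)
    (measurable_of_countable _).aemeasurable (measurable_of_countable _).aemeasurable
    (by linarith [Nat.cast_nonneg (α := ℝ) d])
  simp only [MeasureTheory.lintegral_count, Pi.add_apply] at M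
  refine (ENNReal.rpow_le_rpow (ENNReal.tsum_le_tsum fun i =>
    ENNReal.rpow_le_rpow (h i) hn0.le) (by positivity)).trans (M.trans ?_)
  gcongr
  refine (ENNReal.rpow_le_rpow (conv_bound k d hd q y) (by positivity)).trans (le_of_eq ?_)
  rw [ENNReal.mul_rpow_of_nonneg _ _ (by positivity)]
  simp only [← ENNReal.rpow_natCast, ← ENNReal.rpow_mul]
  congr 2
  · push_cast; field_simp
  · ring

/-- The `ℝ≥0∞`-valued `p`-norm agrees with the real one for `p`-summable nonnegative functions. -/
lemma coe_norm {ι : Type*} (f : ι → ℝ) (hf : ∀ j, 0 ≤ f j) (p : ℝ) (hp : 0 < p)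
    (hs : Summable fun j => |f j| ^ p) :
    (∑' j, ENNReal.ofReal (f j) ^ p) ^ (1 / p) =
      ENNReal.ofReal ((∑' j, |f j| ^ p) ^ (1 / p)) := by
  have h0 : ∀ j, 0 ≤ |f j| ^ p := fun j => Real.rpow_nonneg (abs_nonneg _) _
  rw [← ENNReal.ofReal_rpow_of_nonneg (tsum_nonneg h0) (by positivity),
    ENNReal.ofReal_tsum_of_nonneg h0 hs]
  congr 2
  ext j
  rw [ENNReal.ofReal_rpow_of_nonneg (hf j) hp.le, abs_of_nonneg (hf j)]

/-- No summability is needed: a divergent real sum has the junk value `0`. -/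
lemma ofReal_tsum_le {ι : Type*} (f : ι → ℝ) (hf : ∀ j, 0 ≤ f j) :
    ENNReal.ofReal (∑' j, f j) ≤ ∑' j, ENNReal.ofReal (f j) := by
  by_cases hs : Summable f
  · exact (ENNReal.ofReal_tsum_of_nonneg hf hs).le
  · simp [tsum_eq_zero_of_not_summable hs]

/-- The a priori estimate `‖x‖ ≤ δ + γ ‖x‖ ^ d` for fixed points of `T`. -/
lemma fixed_point_norm_le (k d : ℕ) (hd : 2 ≤ d) (Q : ZkL k → ℝ) (hQ : ∀ j, 0 ≤ Q j)
    (hγ : Summable fun j => |Q j| ^ (((d : ℝ) + 1) / 2))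
    (hδ : Summable fun j : ZkP k => |Q j.1| ^ ((d : ℝ) + 1))
    (x : ZkP k → ℝ) (hx : memD k d x) (hfix : ∀ i : ZkP k, opT k d Q x i.1 = x i) :
    norm0 k ((d : ℝ) + 1) x ≤ del k d Q + gam k d Q * norm0 k ((d : ℝ) + 1) x ^ d := by
  obtain ⟨hxs, hx0⟩ := hx
  have hterm : ∀ (i : ZkL k) (j : ZkP k), 0 ≤ Q i * x j ^ d := fun i j =>
    mul_nonneg (hQ _) (pow_nonneg (hx0 j) d)
  have hb := norm_bound k d hd (fun j => ENNReal.ofReal (Q j)) (fun j => ENNReal.ofReal (x j)) (by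
    intro i
    have hnum : 0 ≤ ∑' j : ZkP k, Q (i.1 - j.1) * x j ^ d := tsum_nonneg fun j => hterm _ j
    have hden : 0 ≤ ∑' j : ZkP k, Q j.1 * x j ^ d := tsum_nonneg fun j => hterm _ j
    have h1 : x i ≤ Q i.1 + ∑' j : ZkP k, Q (i.1 - j.1) * x j ^ d := by
      rw [← hfix i]
      exact div_le_self (add_nonneg (hQ _) hnum) (by linarith)
    refine (ENNReal.ofReal_le_ofReal h1).trans ?_
    rw [ENNReal.ofReal_add (hQ _) hnum]
    gcongr
    refine (ofReal_tsum_le _ fun j => hterm _ j).trans (le_of_eq ?_)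
    congr 1; ext j
    rw [ENNReal.ofReal_mul (hQ _), ENNReal.ofReal_pow (hx0 j)])
  rw [coe_norm x hx0 _ (by positivity) hxs, coe_norm Q hQ _ (by positivity) hγ,
    coe_norm (fun j : ZkP k => Q j.1) (fun j => hQ _) _ (by positivity) hδ] at hb
  have hn : ∀ {ι : Type} (f : ι → ℝ) (p s : ℝ), 0 ≤ (∑' j, |f j| ^ p) ^ s := fun f p s =>
    Real.rpow_nonneg (tsum_nonneg fun j => Real.rpow_nonneg (abs_nonneg _) _) _
  rw [← ENNReal.ofReal_pow (hn x _ _), ← ENNReal.ofReal_mul (hn Q _ _),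
    ← ENNReal.ofReal_add (hn (fun j : ZkP k => Q j.1) _ _)
      (mul_nonneg (hn Q _ _) (pow_nonneg (hn x _ _) _)),
    ENNReal.ofReal_le_ofReal_iff (add_nonneg (hn (fun j : ZkP k => Q j.1) _ _)
      (mul_nonneg (hn Q _ _) (pow_nonneg (hn x _ _) _)))] at hb
  exact hb

/-- The contraction condition on `ε` absorbs the nonlinear term `γ a ^ d` into the left-hand side
at the cost of a factor `(1 - 1 / (2 d)) ^ (d + 1) ≥ 1 / 4`. -/
lemma pow_le_of_le_add (d : ℕ) (hd : 2 ≤ d) (a δ γ ε : ℝ) (ha : 0 ≤ a) (hδ : 0 ≤ δ) (hγ : 0 ≤ γ)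
    (hε : 0 < ε) (haε : a ≤ ε) (h : a ≤ δ + γ * a ^ d)
    (hc : 2 * d * γ * ε ^ (d - 1) + 2 * d * δ * ε ^ d < 1) :
    a ^ (d + 1) ≤ 4 * δ ^ (d + 1) := by
  have hd' : (2 : ℝ) ≤ d := by exact_mod_cast hd
  have h1 : 2 * d * γ * a ^ (d - 1) ≤ 1 := by
    have : 2 * d * γ * a ^ (d - 1) ≤ 2 * d * γ * ε ^ (d - 1) := by gcongr
    have : 0 ≤ 2 * d * δ * ε ^ d := by positivity
    linarith
  have h2 : γ * a ^ d ≤ a / (2 * d) := by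
    obtain ⟨m, rfl⟩ : ∃ m, d = m + 1 := ⟨d - 1, by omega⟩
    rw [le_div_iff₀ (by linarith)]
    simp only [Nat.add_sub_cancel] at h1
    calc _ = (2 * ((m + 1 : ℕ) : ℝ) * γ * a ^ m) * a := by ring
      _ ≤ 1 * a := by gcongr
      _ = a := one_mul a
  set t : ℝ := 1 / (2 * d) with ht
  have ht0 : t ≤ 1 / 4 := by rw [ht]; apply one_div_le_one_div_of_le <;> linarith
  have h3 : (1 - t) * a ≤ δ := by
    have : a / (2 * d) = t * a := by rw [ht]; ring
    linarith
  -- Bernoulli: `(1 - t) ^ (d + 1) ≥ 1 - (d + 1) t = 1 / 2 - t ≥ 1 / 4`.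
  have hB : 1 / 4 ≤ (1 - t) ^ (d + 1) := by
    have := one_add_mul_le_pow (a := -t) (by linarith) (d + 1)
    have e : ((d + 1 : ℕ) : ℝ) * t = 1 / 2 + t := by rw [ht]; push_cast; field_simp
    rw [← sub_eq_add_neg] at this
    nlinarith
  have h4 : (1 - t) ^ (d + 1) * a ^ (d + 1) ≤ δ ^ (d + 1) := by
    rw [← mul_pow]
    exact pow_le_pow_left₀ (mul_nonneg (by linarith) ha) h3 _
  have := mul_le_mul_of_nonneg_right hB (pow_nonneg ha (d + 1))
  linarith

/-- analytic content of Theorem 4.2, part 2: large-degree concentration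
bound. Under the hypotheses of Theorem 4.2 there are `C > 0` and `d₀ ≥ 2` such that for all
`d ≥ d₀`, all `β ≥ β_{A,d}`, and every good-set witness `ε` for `Q := Q_β`, the unique
fixed point `x` of `T` in the `ε`-ball satisfies `‖x‖_{d+1,ℤ^k∖{0}}^{d+1} ≤ C/d`
(this quantity equals the Gibbs ratio `μ_i(σ_0 ≠ i)/μ_i(σ_0 = i)` and tends to `0`). -/
theorem stmt19 (k : ℕ) (hk : 1 ≤ k)
    (U : ZkL k → ℝ) (hUnn : ∀ j, 0 ≤ U j) (hUeven : ∀ j, U (-j) = U j) (hU0 : U 0 = 0)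
    (v : ℝ) (hv : IsGLB {y : ℝ | ∃ j : ZkL k, j ≠ 0 ∧ y = U j} v) (hvpos : 0 < v)
    (A : ℝ) (hA : 1 / v < A)
    (hfin : ∃ d : ℕ, 2 ≤ d ∧ Summable fun j : ZkL k =>
      Real.exp (-(A * Real.log d / ((d : ℝ) + 1)) * U j) ^ (((d : ℝ) + 1) / 2)) :
    ∃ C : ℝ, 0 < C ∧ ∃ d₀ : ℕ, 2 ≤ d₀ ∧ ∀ d : ℕ, d₀ ≤ d →
      ∀ β : ℝ, A * Real.log d / ((d : ℝ) + 1) ≤ β →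
        ∀ ε : ℝ, 0 < ε →
          del k d (fun j => Real.exp (-β * U j)) +
              gam k d (fun j => Real.exp (-β * U j)) * ε ^ d ≤ ε →
          2 * d * gam k d (fun j => Real.exp (-β * U j)) * ε ^ (d - 1) +
              2 * d * del k d (fun j => Real.exp (-β * U j)) * ε ^ d < 1 →
          ∀ x : ZkP k → ℝ, memD k d x → norm0 k ((d : ℝ) + 1) x ≤ ε →
            (∀ i : ZkP k, opT k d (fun j => Real.exp (-β * U j)) x i.1 = x i) →
            norm0 k ((d : ℝ) + 1) x ^ (d + 1) ≤ C / d := by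
  obtain ⟨D, hD, hS⟩ := hfin
  have hA0 : 0 < A := (by positivity : 0 < 1 / v).trans hA
  have hAv : 1 ≤ A * v := ((div_lt_iff₀ hvpos).1 hA).le
  have hD0 : (0 : ℝ) < D := by exact_mod_cast (by omega : 0 < D)
  have hsD : ∀ j, Real.exp (-(A * Real.log D / ((D : ℝ) + 1)) * U j) ^ (((D : ℝ) + 1) / 2) =
      Real.exp (-(A * Real.log D / 2 * U j)) := by
    intro j
    rw [← Real.exp_mul]
    congr 1
    field_simp
  simp only [hsD] at hS
  set S := ∑' j, Real.exp (-(A * Real.log D / 2 * U j)) with hSdef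
  have hSpos : 0 < S := hS.tsum_pos (fun j => (Real.exp_pos _).le) 0 (Real.exp_pos _)
  refine ⟨4 * (D * S), by positivity, D, hD, ?_⟩
  intro d hDd β hβ ε hε _ hc x hx hxε hfix
  have hd : 2 ≤ d := hD.trans hDd
  have hd0 : (0 : ℝ) < d := by exact_mod_cast (by omega : 0 < d)
  have hlogD : 0 ≤ Real.log D := Real.log_natCast_nonneg D
  have hlog : Real.log D ≤ Real.log d := Real.log_le_log hD0 (by exact_mod_cast hDd)
  have hn0 : (0 : ℝ) < (d : ℝ) + 1 := by positivity
  have hβ' : A * Real.log d ≤ β * ((d : ℝ) + 1) := (div_le_iff₀ hn0).1 hβ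
  have hAlog : A * Real.log D ≤ A * Real.log d := by gcongr
  have hγle : ∀ j, |Real.exp (-β * U j)| ^ (((d : ℝ) + 1) / 2) ≤
      Real.exp (-(A * Real.log D / 2 * U j)) := by
    intro j
    rw [Real.abs_exp, ← Real.exp_mul, Real.exp_le_exp]
    nlinarith [hUnn j]
  have hδle : ∀ j : ZkP k, |Real.exp (-β * U j.1)| ^ ((d : ℝ) + 1) ≤
      D / d * Real.exp (-(A * Real.log D / 2 * U j.1)) := by
    intro j
    have hvj : v ≤ U j.1 := hv.1 ⟨j.1, j.2, rfl⟩
    have hAU : 1 ≤ A * U j.1 := hAv.trans (by gcongr)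
    have e : (D : ℝ) / d = Real.exp (Real.log D - Real.log d) := by
      rw [Real.exp_sub, Real.exp_log hD0, Real.exp_log hd0]
    rw [Real.abs_exp, ← Real.exp_mul, e, ← Real.exp_add, Real.exp_le_exp]
    have h1 : A * Real.log d * U j.1 ≤ β * ((d : ℝ) + 1) * U j.1 := by
      gcongr
      exact hUnn _
    -- The factor `(D / d) ^ (A U(j))` is at most `D / d` because `A U(j) ≥ 1`.
    have h2 : Real.log d - Real.log D ≤ A * U j.1 * (Real.log d - Real.log D) :=
      le_mul_of_one_le_left (by linarith) hAU
    have h3 : 0 ≤ A * U j.1 * Real.log D := by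
      have := hUnn j.1
      positivity
    nlinarith
  have hSP : Summable fun j : ZkP k => Real.exp (-(A * Real.log D / 2 * U j.1)) :=
    hS.subtype _
  have hγs : Summable fun j => |Real.exp (-β * U j)| ^ (((d : ℝ) + 1) / 2) :=
    Summable.of_nonneg_of_le (fun j => by positivity) hγle hS
  have hδs : Summable fun j : ZkP k => |Real.exp (-β * U j.1)| ^ ((d : ℝ) + 1) :=
    Summable.of_nonneg_of_le (fun j => by positivity) hδle (hSP.mul_left _)
  have hδpow : del k d (fun j => Real.exp (-β * U j)) ^ (d + 1) ≤ D / d * S := by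
    have h0 : 0 ≤ ∑' j : ZkP k, |Real.exp (-β * U j.1)| ^ ((d : ℝ) + 1) :=
      tsum_nonneg fun j => by positivity
    have e : del k d (fun j => Real.exp (-β * U j)) ^ (d + 1) =
        ∑' j : ZkP k, |Real.exp (-β * U j.1)| ^ ((d : ℝ) + 1) := by
      unfold del normPunct
      rw [← Real.rpow_natCast, ← Real.rpow_mul h0]
      push_cast
      rw [one_div_mul_cancel hn0.ne', Real.rpow_one]
    rw [e]
    calc _ ≤ ∑' j : ZkP k, D / d * Real.exp (-(A * Real.log D / 2 * U j.1)) :=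
          hδs.tsum_le_tsum hδle (hSP.mul_left _)
      _ = D / d * ∑' j : ZkP k, Real.exp (-(A * Real.log D / 2 * U j.1)) := tsum_mul_left
      _ ≤ D / d * S := by
          gcongr
          exact hS.tsum_subtype_le _ _ (fun j => (Real.exp_pos _).le)
  have hfin := pow_le_of_le_add d hd (norm0 k ((d : ℝ) + 1) x) _ _ ε
    (Real.rpow_nonneg (tsum_nonneg fun j => by positivity) _)
    (Real.rpow_nonneg (tsum_nonneg fun j => by positivity) _)
    (Real.rpow_nonneg (tsum_nonneg fun j => by positivity) _) hε hxε
    (fixed_point_norm_le k d hd _ (fun j => (Real.exp_pos _).le) hγs hδs x hx hfix) hc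
  calc _ ≤ _ := hfin
    _ ≤ 4 * (D / d * S) := mul_le_mul_of_nonneg_left hδpow (by norm_num)
    _ = 4 * (D * S) / d := by ring
end
end
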